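/- Assume the stated hypotheses on Ω and u, and let a ∈ ∂Ω be a GBU point. Then the final profile is more singular in the tangential direction: for every K > 0 there exists η > 0 such that for every boundary point x ∈ ∂Ω with 0 < |x − a| < η one has liminf_{t→T⁻} u_ν(x,t) ≥ K |x − a|^{−β} (here u_ν(x,t) = ∇u(x,t)·ν_x is defined for t < T since u is C¹ in space up to the boundary for t < T). In particular |x − a|^β u_ν(x,T) → ∞ as x → a along ∂Ω, where u_ν(x,T) := lim_{t→T⁻} u_ν(x,t) ∈ (−∞, ∞]. -/

import Mathlib

open Set Metric Filter RealInnerProductSpace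

noncomputable section

/-- A set `Ω ⊆ ℝⁿ` has boundary of class `C²`: near each boundary point, `Ω` is the strict
sublevel set of a `C²` function with nonvanishing gradient (equivalently, after a rigid motion,
the boundary is locally the graph of a `C²` function with `Ω` strictly on one side). -/
def IsC2Boundary {n : ℕ} (Ω : Set (EuclideanSpace ℝ (Fin n))) : Prop :=
  ∀ x ∈ frontier Ω, ∃ f : EuclideanSpace ℝ (Fin n) → ℝ, ∃ U ∈ nhds x,
    ContDiffOn ℝ 2 f U ∧ (∀ y ∈ U, fderiv ℝ f y ≠ 0) ∧
    U ∩ Ω = U ∩ {y | f y < 0} ∧ U ∩ frontier Ω = U ∩ {y | f y = 0}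

/-!
Near the blow-up point `a`, flatten the boundary by a `C²` defining function `ζ` of `Ω` with
`Δζ ≤ -1`. Since `u_t` is bounded, every late time slice `w` of the solution satisfies
`|Δw + |∇w|^p| ≤ M`, together with `|∇w| ≤ C ζ ^ (-β)` and `|w| ≤ C ζ ^ (1 - β)`, and all estimates
are elliptic comparison arguments for such functions.

Fix a level `{ζ = s}`, `s = κ r`, at a scale `r` near `a`. If `w ≤ 3 m s ^ (1 - β)` on this level,
then a barrier gives `|w| ≤ A ζ` near `a`, and Brandt's interior estimate, a comparison of `w` with
its reflection, bounds `∇w` near `a`. Comparing a translate `w (· + h)` with `(1 - α) w` plus `α`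
times a barrier, where the convexity of `|·|^p` enters, shows that `w` oscillates on the level by at
most `m s ^ (1 - β)`. Hence if `w < m s ^ (1 - β)` at one point of the level at one late time, then
`w ≤ 3 m s ^ (1 - β)` on the level at all late times, and the gradient stays bounded near `a`. So a
blow-up point forces `w ≥ m s ^ (1 - β)` on the level. A Hopf barrier at a boundary point at
distance `r` from `a` then bounds the normal derivative below by about `m s ^ (-β) / 2`, and this
is at least `K r ^ (-β)` once `κ` is small.
-/

open scoped Topology

section RealVariable

lemma le_of_hasDerivWithinAt_of_quadratic_le {f : ℝ → ℝ} {D c q : ℝ}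
    (hf : HasDerivWithinAt f D (Ioi 0) 0) (h0 : f 0 = 0)
    (h : ∀ᶠ τ in 𝓝[>] (0 : ℝ), c * τ - q * τ ^ 2 ≤ f τ) : c ≤ D := by
  have hslope : Tendsto (fun τ => τ⁻¹ * f τ) (𝓝[>] 0) (𝓝 D) := by
    simpa [slope_fun_def, h0] using (hasDerivWithinAt_iff_tendsto_slope' self_notMem_Ioi).1 hf
  have hlin : Tendsto (fun τ : ℝ => c - q * τ) (𝓝[>] 0) (𝓝 c) := by
    have : Tendsto (fun τ : ℝ => c - q * τ) (𝓝 0) (𝓝 (c - q * 0)) :=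
      (continuous_const.sub (continuous_const.mul continuous_id)).tendsto 0
    simpa using this.mono_left nhdsWithin_le_nhds
  refine le_of_tendsto_of_tendsto hlin hslope ?_
  filter_upwards [h, self_mem_nhdsWithin] with τ hτ (hpos : 0 < τ)
  rw [inv_mul_eq_div, le_div_iff₀ hpos]
  linarith

lemma nonpos_of_isLocalMax_of_hasDerivAt {φ φ' : ℝ → ℝ} {s c : ℝ} (hmax : IsLocalMax φ s)
    (hφ : ∀ᶠ τ in 𝓝 s, HasDerivAt φ (φ' τ) τ) (hφ' : HasDerivAt φ' c s) : c ≤ 0 := by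
  by_contra! hc
  have hderiv : deriv φ =ᶠ[𝓝 s] φ' := hφ.mono fun τ hτ => hτ.deriv
  have hsecond : deriv (deriv φ) s = c := by rw [hderiv.deriv_eq, hφ'.deriv]
  have hmin : IsLocalMin φ s :=
    isLocalMin_of_deriv_deriv_pos (hsecond ▸ hc) hmax.deriv_eq_zero hφ.self_of_nhds.continuousAt
  have hconst : φ =ᶠ[𝓝 s] fun _ => φ s := by
    filter_upwards [hmax, hmin] with τ h₁ h₂ using le_antisymm h₁ h₂
  have hzero : deriv (deriv φ) s = 0 := by
    rw [hconst.deriv.deriv_eq, deriv_const', deriv_const]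
  exact hc.ne' (hsecond ▸ hzero)

lemma sub_le_rpow_of_hasDerivAt_le {k k' : ℝ → ℝ} {β C τ : ℝ} (hβ : β < 1) (hτ : 0 ≤ τ)
    (hk : ContinuousOn k (Icc 0 τ)) (hk' : ∀ σ ∈ Ioo 0 τ, HasDerivAt k (k' σ) σ)
    (hle : ∀ σ ∈ Ioo 0 τ, k' σ ≤ C * σ ^ (-β)) : k τ - k 0 ≤ C / (1 - β) * τ ^ (1 - β) := by
  have hβ' : 0 < 1 - β := sub_pos.2 hβ
  have hmono : MonotoneOn (fun σ => C / (1 - β) * σ ^ (1 - β) - k σ) (Icc 0 τ) := by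
    refine monotoneOn_of_hasDerivWithinAt_nonneg (convex_Icc 0 τ)
      (f' := fun σ => C * σ ^ (-β) - k' σ)
      ((continuous_const.mul (Real.continuous_rpow_const hβ'.le)).continuousOn.sub hk) ?_ ?_
    · rw [interior_Icc]
      intro σ hσ
      have hpow := (Real.hasDerivAt_rpow_const (p := 1 - β) (Or.inl hσ.1.ne')).const_mul
        (C / (1 - β))
      rw [show C / (1 - β) * ((1 - β) * σ ^ (1 - β - 1)) = C * σ ^ (-β) by
        rw [show 1 - β - 1 = -β by ring]; field_simp] at hpow
      exact (hpow.sub (hk' σ hσ)).hasDerivWithinAt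
    · rw [interior_Icc]
      exact fun σ hσ => sub_nonneg.2 (hle σ hσ)
  have := hmono (left_mem_Icc.2 hτ) (right_mem_Icc.2 hτ) hτ
  simp only [Real.zero_rpow hβ'.ne', mul_zero] at this
  linarith

lemma convexOn_norm_rpow {V : Type*} [SeminormedAddCommGroup V] [NormedSpace ℝ V] {p : ℝ}
    (hp : 1 ≤ p) : ConvexOn ℝ univ (fun x : V => ‖x‖ ^ p) := by
  refine ⟨convex_univ, fun x _ y _ s t hs ht hst => ?_⟩
  calc ‖s • x + t • y‖ ^ p ≤ (s * ‖x‖ + t * ‖y‖) ^ p := by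
        gcongr
        exact (convexOn_norm convex_univ).2 (mem_univ x) (mem_univ y) hs ht hst
    _ ≤ s * ‖x‖ ^ p + t * ‖y‖ ^ p :=
        (convexOn_rpow hp).2 (norm_nonneg x) (norm_nonneg y) hs ht hst

end RealVariable

section GradLaplacian

variable {E : Type*} [NormedAddCommGroup E] [InnerProductSpace ℝ E] [FiniteDimensional ℝ E]

/-- `g` is twice differentiable at `x`, with gradient `q` and Laplacian `l` there. The Laplacian is
the trace of the derivative of the gradient field. -/
def HasGradLaplacianAt (g : E → ℝ) (q : E) (l : ℝ) (x : E) : Prop :=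
  ∃ (Gf : E → E) (A : E →L[ℝ] E), (∀ᶠ y in 𝓝 x, HasGradientAt g (Gf y) y) ∧
    HasFDerivAt Gf A x ∧ Gf x = q ∧ LinearMap.trace ℝ E A = l

namespace HasGradLaplacianAt

variable {g g₁ g₂ : E → ℝ} {x q q₁ q₂ : E} {l l₁ l₂ : ℝ}

lemma hasGradientAt (h : HasGradLaplacianAt g q l x) : HasGradientAt g q x := by
  obtain ⟨Gf, A, hg, -, rfl, -⟩ := h
  exact hg.self_of_nhds

lemma continuousAt (h : HasGradLaplacianAt g q l x) : ContinuousAt g x :=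
  h.hasGradientAt.hasFDerivAt.continuousAt

lemma add (h₁ : HasGradLaplacianAt g₁ q₁ l₁ x) (h₂ : HasGradLaplacianAt g₂ q₂ l₂ x) :
    HasGradLaplacianAt (fun y => g₁ y + g₂ y) (q₁ + q₂) (l₁ + l₂) x := by
  obtain ⟨Gf, A, hg, hA, rfl, rfl⟩ := h₁
  obtain ⟨Gf', A', hg', hA', rfl, rfl⟩ := h₂
  refine ⟨fun y => Gf y + Gf' y, A + A', ?_, hA.add hA', rfl, map_add _ _ _⟩
  filter_upwards [hg, hg'] with y hy hy'
  rw [hasGradientAt_iff_hasFDerivAt, map_add]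
  exact hy.hasFDerivAt.add hy'.hasFDerivAt

lemma const_mul (c : ℝ) (h : HasGradLaplacianAt g q l x) :
    HasGradLaplacianAt (fun y => c * g y) (c • q) (c * l) x := by
  obtain ⟨Gf, A, hg, hA, rfl, rfl⟩ := h
  refine ⟨fun y => c • Gf y, c • A, ?_, hA.const_smul c, rfl, map_smul _ _ _⟩
  filter_upwards [hg] with y hy
  rw [hasGradientAt_iff_hasFDerivAt, map_smulₛₗ]
  exact hy.hasFDerivAt.const_mul c

lemma sub (h₁ : HasGradLaplacianAt g₁ q₁ l₁ x) (h₂ : HasGradLaplacianAt g₂ q₂ l₂ x) :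
    HasGradLaplacianAt (fun y => g₁ y - g₂ y) (q₁ - q₂) (l₁ - l₂) x := by
  simpa [sub_eq_add_neg] using h₁.add (h₂.const_mul (-1))

lemma neg (h : HasGradLaplacianAt g q l x) : HasGradLaplacianAt (fun y => -g y) (-q) (-l) x := by
  simpa using h.const_mul (-1)

lemma const (c : ℝ) : HasGradLaplacianAt (fun _ : E => c) 0 0 x :=
  ⟨fun _ => 0, 0, .of_forall fun y => hasGradientAt_const y c, hasFDerivAt_const _ _, rfl,
    map_zero _⟩

lemma norm_sub_sq (b : E) :
    HasGradLaplacianAt (fun y => ‖y - b‖ ^ 2) ((2 : ℝ) • (x - b)) (2 * Module.finrank ℝ E) x := by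
  refine ⟨fun y => (2 : ℝ) • (y - b), (2 : ℝ) • ContinuousLinearMap.id ℝ E, .of_forall fun y => ?_,
    ((hasFDerivAt_id x).sub_const b).const_smul (2 : ℝ), rfl, ?_⟩
  · refine HasFDerivAt.congr_fderiv ((hasFDerivAt_id y).sub_const b).norm_sq ?_
    ext v
    simp
  · simp

lemma inner_sub (b e : E) : HasGradLaplacianAt (fun y => ⟪y - b, e⟫) e 0 x := by
  refine ⟨fun _ => e, 0, .of_forall fun y => ?_, hasFDerivAt_const _ _, rfl, map_zero _⟩
  refine HasFDerivAt.congr_fderiv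
    (((hasFDerivAt_id y).sub_const b).inner ℝ (hasFDerivAt_const e y)) ?_
  ext v
  simp [real_inner_comm]

lemma sq (h : HasGradLaplacianAt g q l x) :
    HasGradLaplacianAt (fun y => g y ^ 2) ((2 * g x) • q) (2 * g x * l + 2 * ‖q‖ ^ 2) x := by
  obtain ⟨Gf, A, hg, hA, rfl, rfl⟩ := h
  refine ⟨fun y => (2 * g y) • Gf y,
    (2 * g x) • A + (2 : ℝ) • (innerSL ℝ (Gf x)).smulRight (Gf x), ?_, ?_, rfl, ?_⟩
  · filter_upwards [hg] with y hy
    refine HasFDerivAt.congr_fderiv (hy.hasFDerivAt.pow 2) ?_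
    ext v
    simp
  · refine HasFDerivAt.congr_fderiv ((hg.self_of_nhds.hasFDerivAt.const_mul (2 : ℝ)).smul hA) ?_
    ext v : 1
    simp [mul_smul]
  · simp

lemma comp_add_right (h : E) (hg : HasGradLaplacianAt g q l (x + h)) :
    HasGradLaplacianAt (fun y => g (y + h)) q l x := by
  obtain ⟨Gf, A, hgf, hA, rfl, rfl⟩ := hg
  have hshift (y : E) : HasFDerivAt (fun y => y + h) (ContinuousLinearMap.id ℝ E) y :=
    (hasFDerivAt_id y).add_const h
  refine ⟨fun y => Gf (y + h), A, ?_, hA.comp x (hshift x), rfl, rfl⟩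
  filter_upwards [(hshift x).continuousAt.eventually hgf] with y hy
  exact hy.hasFDerivAt.comp y (hshift y)

lemma comp_involution (σ : E ≃ₗᵢ[ℝ] E) (hσ : ∀ v, σ (σ v) = v) (b : E)
    (hg : HasGradLaplacianAt g q l (b + σ (x - b))) :
    HasGradLaplacianAt (fun y => g (b + σ (y - b))) (σ q) l x := by
  obtain ⟨Gf, A, hgf, hA, rfl, rfl⟩ := hg
  set S : E →L[ℝ] E := (σ.toContinuousLinearEquiv : E →L[ℝ] E)
  have hadj (v w : E) : ⟪σ v, w⟫ = ⟪v, σ w⟫ := by rw [← σ.inner_map_map v (σ w), hσ]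
  have hS (y : E) : HasFDerivAt (fun y => b + σ (y - b)) S y :=
    (S.hasFDerivAt.comp y ((hasFDerivAt_id y).sub_const b)).const_add b
  refine ⟨fun y => S (Gf (b + σ (y - b))), S.comp (A.comp S), ?_,
    S.hasFDerivAt.comp x (hA.comp x (hS x)), rfl, ?_⟩
  · filter_upwards [(hS x).continuousAt.eventually hgf] with y hy
    refine HasFDerivAt.congr_fderiv (hy.hasFDerivAt.comp y (hS y)) ?_
    ext v
    exact (hadj _ _).symm
  · have hconj : ((S.comp (A.comp S) : E →L[ℝ] E) : E →ₗ[ℝ] E) =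
        σ.toLinearEquiv.conj (A : E →ₗ[ℝ] E) := by
      ext v
      have : σ.symm v = σ v := by rw [LinearIsometryEquiv.symm_apply_eq, hσ]
      simp [S, LinearEquiv.conj_apply, this]
    rw [hconj, LinearMap.trace_conj']

lemma eq_zero_and_nonpos_of_isLocalMax (h : HasGradLaplacianAt g q l x) (hmax : IsLocalMax g x) :
    q = 0 ∧ l ≤ 0 := by
  obtain ⟨Gf, A, hg, hA, rfl, rfl⟩ := h
  have hGf : Gf x = 0 := by simpa using hmax.hasFDerivAt_eq_zero hg.self_of_nhds.hasFDerivAt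
  refine ⟨hGf, ?_⟩
  rw [LinearMap.trace_eq_sum_inner _ (stdOrthonormalBasis ℝ E)]
  refine Finset.sum_nonpos fun i _ => ?_
  set v : E := stdOrthonormalBasis ℝ E i
  have hline (s : ℝ) : HasDerivAt (fun s : ℝ => x + s • v) v s := by
    simpa using ((hasDerivAt_id s).smul_const v).const_add x
  have hx : x + (0 : ℝ) • v = x := by simp
  have htend : Tendsto (fun s : ℝ => x + s • v) (𝓝 0) (𝓝 x) := by
    simpa using (hline 0).continuousAt.tendsto
  refine nonpos_of_isLocalMax_of_hasDerivAt (φ := fun s => g (x + s • v))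
    (φ' := fun s => ⟪v, Gf (x + s • v)⟫) (s := 0) ?_ ?_ ?_
  · simpa [IsLocalMax, IsMaxFilter, hx] using htend.eventually hmax
  · filter_upwards [htend.eventually hg] with s hs
    simpa [real_inner_comm, Function.comp_def] using hs.hasFDerivAt.comp_hasDerivAt s (hline s)
  · have hAv : HasDerivAt (fun s : ℝ => Gf (x + s • v)) (A v) 0 :=
      HasFDerivAt.comp_hasDerivAt (0 : ℝ) (by rwa [hx]) (hline 0)
    simpa using (hasDerivAt_const (0 : ℝ) v).inner ℝ hAv

lemma unique (h₁ : HasGradLaplacianAt g q₁ l₁ x) (h₂ : HasGradLaplacianAt g q₂ l₂ x) :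
    q₁ = q₂ ∧ l₁ = l₂ := by
  have hmax : IsLocalMax (fun y => g y - g y) x := .of_forall fun y => by simp
  obtain ⟨hq, hle⟩ := (h₁.sub h₂).eq_zero_and_nonpos_of_isLocalMax hmax
  exact ⟨sub_eq_zero.1 hq, (sub_nonpos.1 hle).antisymm
    (sub_nonpos.1 ((h₂.sub h₁).eq_zero_and_nonpos_of_isLocalMax hmax).2)⟩

lemma continuousOn_gradient {G : E → E} {s : Set E}
    (h : ∀ y ∈ s, ∃ l, HasGradLaplacianAt g (G y) l y) : ContinuousOn G s := by
  intro y hy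
  obtain ⟨l, Gf, A, hg, hA, -, -⟩ := h y hy
  have heq (z : E) (hz : HasGradientAt g (Gf z) z) (hzs : z ∈ s) : G z = Gf z :=
    let ⟨_, hz'⟩ := h z hzs
    hz'.hasGradientAt.unique hz
  refine hA.continuousAt.continuousWithinAt.congr_of_eventuallyEq ?_ (heq y hg.self_of_nhds hy)
  filter_upwards [nhdsWithin_le_nhds hg, self_mem_nhdsWithin] with z hz hzs using heq z hz hzs

end HasGradLaplacianAt

end GradLaplacian

section InteriorEstimates

variable {E : Type*} [NormedAddCommGroup E] [InnerProductSpace ℝ E] [FiniteDimensional ℝ E]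

lemma le_of_hasGradLaplacianAt {v B φ : E → ℝ} {b : E} {R : ℝ}
    (hφ : ContinuousOn φ (closedBall b R))
    (hv : ContinuousOn v (closedBall b R ∩ {x | 0 ≤ φ x}))
    (hB : ContinuousOn B (closedBall b R ∩ {x | 0 ≤ φ x}))
    (hsphere : ∀ x ∈ sphere b R, 0 ≤ φ x → v x ≤ B x)
    (hzero : ∀ x ∈ closedBall b R, φ x = 0 → v x ≤ B x)
    (hpos : ∀ x ∈ ball b R, 0 < φ x → ∃ q l q' l', HasGradLaplacianAt v q l x ∧
      HasGradLaplacianAt B q' l' x ∧ (q = q' → l' < l)) :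
    ∀ x ∈ closedBall b R, 0 ≤ φ x → v x ≤ B x := by
  intro x hx hφx
  have hcompact : IsCompact (closedBall b R ∩ {x | 0 ≤ φ x}) :=
    (isCompact_closedBall b R).of_isClosed_subset
      (hφ.preimage_isClosed_of_isClosed isClosed_closedBall isClosed_Ici) inter_subset_left
  obtain ⟨y, ⟨hyR, hφy⟩, hmax⟩ := hcompact.exists_isMaxOn ⟨x, hx, hφx⟩ (hv.sub hB)
  refine sub_nonpos.1 ((hmax ⟨hx, hφx⟩).trans (sub_nonpos.2 (not_lt.1 fun hvB => ?_)))
  have hyφ : 0 < φ y := lt_of_le_of_ne hφy fun h => hvB.not_ge (hzero y hyR h.symm)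
  have hyball : y ∈ ball b R := lt_of_le_of_ne hyR fun h => hvB.not_ge (hsphere y h hφy)
  have hnhds : closedBall b R ∩ {x | 0 ≤ φ x} ∈ 𝓝 y := by
    have hball : closedBall b R ∈ 𝓝 y := closedBall_mem_nhds_of_mem hyball
    filter_upwards [hball, (hφ.continuousAt hball).eventually (lt_mem_nhds hyφ)] with z hz hφz
    exact ⟨hz, hφz.le⟩
  obtain ⟨q, l, q', l', hql, hql', hlt⟩ := hpos y hyball hyφ
  obtain ⟨hq, hl⟩ := (hql.sub hql').eq_zero_and_nonpos_of_isLocalMax (hmax.isLocalMax hnhds)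
  exact (hlt (sub_eq_zero.1 hq)).not_ge (sub_nonpos.1 hl)

lemma sub_reflection_le {w : E → ℝ} {b v : E} {R Q F k : ℝ} (hv : ‖v‖ = 1) (hR : 0 < R)
    (hw : ∀ y ∈ closedBall b R, |w y| ≤ Q)
    (hjet : ∀ y ∈ closedBall b R, ∃ q l, HasGradLaplacianAt w q l y ∧ |l| ≤ F)
    (hk : 2 * Module.finrank ℝ E * Q / R ^ 2 + F < k)
    {y : E} (hy : y ∈ closedBall b R) (hyv : 0 ≤ ⟪y - b, v⟫) :
    w y - w (b + (ℝ ∙ v)ᗮ.reflection (y - b)) ≤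
      2 * Q / R ^ 2 * ‖y - b‖ ^ 2 + k * (R * ⟪y - b, v⟫ - ⟪y - b, v⟫ ^ 2) := by
  set σ := (ℝ ∙ v)ᗮ.reflection
  have hmaps {y : E} (hy : y ∈ closedBall b R) : b + σ (y - b) ∈ closedBall b R := by
    rw [mem_closedBall, dist_eq_norm] at hy ⊢
    rwa [add_sub_cancel_left, LinearIsometryEquiv.norm_map]
  have hQ : 0 ≤ Q := (abs_nonneg _).trans (hw y hy)
  have hF : 0 ≤ F := let ⟨_, _, _, hl⟩ := hjet y hy; (abs_nonneg _).trans hl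
  have hk0 : 0 ≤ k := le_trans (by positivity) hk.le
  have hdiff (y) (hy : y ∈ closedBall b R) : ∃ q l,
      HasGradLaplacianAt (fun y => w y - w (b + σ (y - b))) q l y ∧ -(2 * F) ≤ l := by
    obtain ⟨q, l, hq, hl⟩ := hjet y hy
    obtain ⟨q', l', hq', hl'⟩ := hjet _ (hmaps hy)
    refine ⟨_, _, hq.sub (hq'.comp_involution σ (Submodule.reflection_reflection _) b), ?_⟩
    linarith [(abs_le.1 hl).1, (abs_le.1 hl').2]
  refine le_of_hasGradLaplacianAt (φ := fun y => ⟪y - b, v⟫)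
    (v := fun y => w y - w (b + σ (y - b))) (by fun_prop) (fun y hy => ?_)
    (B := fun y => 2 * Q / R ^ 2 * ‖y - b‖ ^ 2 + k * (R * ⟪y - b, v⟫ - ⟪y - b, v⟫ ^ 2))
    (by fun_prop) (fun y hy hyv => ?_) (fun y _ hyv => ?_) (fun y hy _ => ?_) y hy hyv
  · obtain ⟨q, l, hq, -⟩ := hdiff y hy.1
    exact hq.continuousAt.continuousWithinAt
  · have hyR : ‖y - b‖ = R := by rwa [mem_sphere, dist_eq_norm] at hy
    have hle : ⟪y - b, v⟫ ≤ R := by simpa [hv, hyR] using real_inner_le_norm (y - b) v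
    have hbarrier : 0 ≤ k * (R * ⟪y - b, v⟫ - ⟪y - b, v⟫ ^ 2) := mul_nonneg hk0 (by nlinarith)
    have h₁ := (abs_le.1 (hw y (sphere_subset_closedBall hy))).2
    have h₂ := (abs_le.1 (hw _ (hmaps (sphere_subset_closedBall hy)))).1
    rw [hyR, div_mul_cancel₀ _ (by positivity)]
    linarith
  · have hfix : σ (y - b) = y - b := Submodule.reflection_mem_subspace_eq_self
      (Submodule.mem_orthogonal_singleton_iff_inner_left.2 hyv)
    rw [hfix, hyv, add_sub_cancel, sub_self]
    have : 0 ≤ 2 * Q / R ^ 2 * ‖y - b‖ ^ 2 := by positivity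
    linarith
  · obtain ⟨q, l, hq, hl⟩ := hdiff y (ball_subset_closedBall hy)
    have hlin : HasGradLaplacianAt (fun y => ⟪y - b, v⟫) v 0 y := .inner_sub b v
    refine ⟨q, l, _, _, hq, ((HasGradLaplacianAt.norm_sub_sq b).const_mul (2 * Q / R ^ 2)).add
      (((hlin.const_mul R).sub hlin.sq).const_mul k), fun _ => hl.trans_lt' ?_⟩
    have : 2 * Q / R ^ 2 * (2 * Module.finrank ℝ E) =
        2 * (2 * Module.finrank ℝ E * Q / R ^ 2) := by ring
    rw [this, hv]
    linarith

lemma two_mul_inner_gradient_le {w : E → ℝ} {b v q₀ : E} {R Q F : ℝ} (hv : ‖v‖ = 1) (hR : 0 < R)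
    (hw : ∀ y ∈ closedBall b R, |w y| ≤ Q)
    (hjet : ∀ y ∈ closedBall b R, ∃ q l, HasGradLaplacianAt w q l y ∧ |l| ≤ F)
    (hq₀ : HasGradientAt w q₀ b) :
    2 * ⟪q₀, v⟫ ≤ (2 * Module.finrank ℝ E * Q / R ^ 2 + F) * R := by
  refine (div_le_iff₀ hR).1 (le_of_forall_gt_imp_ge_of_dense fun k hk => (div_le_iff₀ hR).2 ?_)
  have hline (c : ℝ) : HasDerivAt (fun t : ℝ => w (b + t • c • v)) (c * ⟪q₀, v⟫) 0 := by
    have hpath : HasDerivAt (fun t : ℝ => b + t • c • v) (c • v) 0 := by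
      simpa using ((hasDerivAt_id (0 : ℝ)).smul_const (c • v)).const_add b
    have hq₀' : HasGradientAt w q₀ (b + (0 : ℝ) • c • v) := by simpa using hq₀
    simpa [Function.comp_def, inner_smul_right] using
      hq₀'.hasFDerivAt.comp_hasDerivAt (0 : ℝ) hpath
  have hodd : HasDerivAt (fun t : ℝ => w (b + t • (-1 : ℝ) • v) - w (b + t • (1 : ℝ) • v))
      (-(2 * ⟪q₀, v⟫)) 0 := by
    have := (hline (-1)).sub (hline 1)
    rwa [show -1 * ⟪q₀, v⟫ - 1 * ⟪q₀, v⟫ = -(2 * ⟪q₀, v⟫) by ring] at this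
  have hlow := le_of_hasDerivWithinAt_of_quadratic_le (c := -(k * R)) (q := 2 * Q / R ^ 2 - k)
    hodd.hasDerivWithinAt (by simp) ?_
  · linarith
  filter_upwards [Ioo_mem_nhdsGT hR] with t ⟨ht0, htR⟩
  have hnorm : ‖t • v‖ = t := by rw [norm_smul, hv, mul_one, Real.norm_of_nonneg ht0.le]
  have hinner : ⟪t • v, v⟫ = t := by
    rw [real_inner_smul_left, real_inner_self_eq_norm_sq, hv, one_pow, mul_one]
  have hmem : b + t • v ∈ closedBall b R := by
    rw [mem_closedBall, dist_eq_norm, add_sub_cancel_left, hnorm]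
    exact htR.le
  have hcomp := sub_reflection_le hv hR hw hjet hk hmem
    (by rw [add_sub_cancel_left, hinner]; exact ht0.le)
  rw [add_sub_cancel_left, hinner, hnorm, map_smul,
    Submodule.reflection_orthogonalComplement_singleton_eq_neg] at hcomp
  rw [one_smul, neg_one_smul]
  linarith

lemma two_mul_norm_gradient_le {w : E → ℝ} {b q₀ : E} {R Q F : ℝ} (hR : 0 < R)
    (hw : ∀ y ∈ closedBall b R, |w y| ≤ Q)
    (hjet : ∀ y ∈ closedBall b R, ∃ q l, HasGradLaplacianAt w q l y ∧ |l| ≤ F)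
    (hq₀ : HasGradientAt w q₀ b) :
    2 * ‖q₀‖ ≤ (2 * Module.finrank ℝ E * Q / R ^ 2 + F) * R := by
  rcases eq_or_ne q₀ 0 with rfl | hne
  · have hb : b ∈ closedBall b R := mem_closedBall_self hR.le
    have hQ : 0 ≤ Q := (abs_nonneg _).trans (hw b hb)
    have hF : 0 ≤ F := let ⟨_, _, _, hl⟩ := hjet b hb; (abs_nonneg _).trans hl
    rw [norm_zero, mul_zero]
    positivity
  · have h := two_mul_inner_gradient_le (v := ‖q₀‖⁻¹ • q₀)
      (by rw [norm_smul, norm_inv, norm_norm, inv_mul_cancel₀ (norm_ne_zero_iff.2 hne)])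
      hR hw hjet hq₀
    rwa [real_inner_smul_right, real_inner_self_eq_norm_mul_norm,
      inv_mul_cancel_left₀ (norm_ne_zero_iff.2 hne)] at h

lemma exists_closedBall_le_two_mul {X : Type*} [PseudoMetricSpace X] [ProperSpace X] {f : X → ℝ}
    {x₀ : X} {d : ℝ} (hd : 0 < d) (hf : ContinuousOn f (closedBall x₀ d)) (hx₀ : 0 < f x₀) :
    ∃ y₀, ∃ r ∈ Ioc 0 d, d * f x₀ ≤ r * f y₀ ∧ closedBall y₀ (r / 2) ⊆ closedBall x₀ d ∧
      ∀ y ∈ closedBall y₀ (r / 2), f y ≤ 2 * f y₀ := by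
  obtain ⟨y₀, hy₀, hmax⟩ := (isCompact_closedBall x₀ d).exists_isMaxOn
    ⟨x₀, mem_closedBall_self hd.le⟩ (f := fun y => (d - dist y x₀) * f y)
    (ContinuousOn.mul (by fun_prop) hf)
  have hmax' {y : X} (hy : y ∈ closedBall x₀ d) :
      (d - dist y x₀) * f y ≤ (d - dist y₀ x₀) * f y₀ := hmax hy
  have hle : d * f x₀ ≤ (d - dist y₀ x₀) * f y₀ := by
    simpa using hmax' (mem_closedBall_self hd.le)
  have hprod : 0 < (d - dist y₀ x₀) * f y₀ := (mul_pos hd hx₀).trans_le hle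
  have hr : 0 < d - dist y₀ x₀ :=
    (sub_nonneg.2 hy₀).lt_of_ne fun h => by rw [← h, zero_mul] at hprod; exact hprod.false
  have hfy₀ : 0 < f y₀ := (mul_pos_iff_of_pos_left hr).1 hprod
  have hsub {y : X} (hy : y ∈ closedBall y₀ ((d - dist y₀ x₀) / 2)) :
      (d - dist y₀ x₀) / 2 ≤ d - dist y x₀ := by
    linarith [mem_closedBall.1 hy, dist_triangle y y₀ x₀]
  refine ⟨y₀, d - dist y₀ x₀, ⟨hr, sub_le_self _ dist_nonneg⟩, hle, fun y hy => ?_, fun y hy => ?_⟩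
  · exact mem_closedBall.2 (by linarith [hsub hy])
  · by_contra! hlt
    have hmem : y ∈ closedBall x₀ d := mem_closedBall.2 (by linarith [hsub hy])
    have : (d - dist y₀ x₀) / 2 * f y ≤ (d - dist y x₀) * f y :=
      mul_le_mul_of_nonneg_right (hsub hy) (by linarith)
    nlinarith [hmax' hmem]

/- Brandt's method: after the point selection the Laplacian is bounded on a small ball by a multiple
of the gradient at its centre, which the reflection estimate on that ball absorbs. -/
lemma norm_gradient_le_of_abs_laplacian_le {w : E → ℝ} {G : E → E} {x₀ : E} {d A M C : ℝ}
    (hd : 0 < d) (hM : 0 ≤ M) (hC : 0 ≤ C) (hw : ∀ y ∈ closedBall x₀ d, |w y| ≤ A * d)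
    (hjet : ∀ y ∈ closedBall x₀ d, ∃ l, HasGradLaplacianAt w (G y) l y ∧
      |l| ≤ M + C / d * ‖G y‖) :
    ‖G x₀‖ ≤ 4 * Module.finrank ℝ E * A * (1 + C) + M * d := by
  set n : ℝ := (Module.finrank ℝ E : ℝ)
  have : 0 ≤ n := Nat.cast_nonneg _
  have hA : 0 ≤ A := by
    have := (abs_nonneg _).trans (hw x₀ (mem_closedBall_self hd.le))
    exact nonneg_of_mul_nonneg_left this hd
  rcases (norm_nonneg (G x₀)).eq_or_lt with h0 | hpos
  · rw [← h0]; positivity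
  have hGc : ContinuousOn G (closedBall x₀ d) :=
    HasGradLaplacianAt.continuousOn_gradient fun y hy => let ⟨l, hl, _⟩ := hjet y hy; ⟨l, hl⟩
  obtain ⟨y₀, r, ⟨hr, hrd⟩, hle, hsub, hG⟩ := exists_closedBall_le_two_mul hd hGc.norm hpos
  set θ := 1 / (2 * (1 + C)) with hθ
  have hθ0 : 0 < θ := by positivity
  have hθ1 : θ ≤ 1 / 2 := one_div_le_one_div_of_le two_pos (by linarith)
  have hθC : 2 * C * θ ≤ 1 := by
    rw [hθ, mul_one_div, div_le_one (by positivity)]; linarith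
  have hball : closedBall y₀ (θ * r) ⊆ closedBall y₀ (r / 2) :=
    closedBall_subset_closedBall (by nlinarith)
  obtain ⟨l₀, hl₀, -⟩ := hjet y₀ (hsub (mem_closedBall_self (by positivity)))
  have hreflect := two_mul_norm_gradient_le (Q := A * d) (F := M + C / d * (2 * ‖G y₀‖))
    (mul_pos hθ0 hr) (fun y hy => hw y (hsub (hball hy))) (fun y hy => by
      obtain ⟨l, hl, hlM⟩ := hjet y (hsub (hball hy))
      exact ⟨_, l, hl, hlM.trans (by gcongr; exact hG y (hball hy))⟩) hl₀.hasGradientAt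
  have habsorb : r / d * (2 * C * θ) * (r * ‖G y₀‖) ≤ 1 * 1 * (r * ‖G y₀‖) := by
    gcongr
    exact (div_le_one hd).2 hrd
  have hMr : M * θ * r ^ 2 ≤ M * 1 * d ^ 2 := by gcongr; linarith
  refine le_of_mul_le_mul_left ?_ hd
  calc d * ‖G x₀‖ ≤ r * (2 * ‖G y₀‖) - r * ‖G y₀‖ := by linarith
    _ ≤ r * ((2 * n * (A * d) / (θ * r) ^ 2 + (M + C / d * (2 * ‖G y₀‖))) * (θ * r)) -
          r * ‖G y₀‖ := by gcongr
    _ = 2 * n * A * d / θ + M * θ * r ^ 2 + r / d * (2 * C * θ) * (r * ‖G y₀‖) -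
          r * ‖G y₀‖ := by field_simp; ring
    _ ≤ 2 * n * A * d / θ + M * 1 * d ^ 2 := by linarith
    _ = d * (4 * n * A * (1 + C) + M * d) := by rw [hθ]; field_simp; ring

end InteriorEstimates

section BoundaryChart

variable {E : Type*} [NormedAddCommGroup E] [InnerProductSpace ℝ E] [FiniteDimensional ℝ E]

/-- Near the point `a`, the set `Ω` is the strict sublevel set of a `C²` function with nonvanishing
derivative, and the frontier of `Ω` is its zero set. This is the condition of `IsC2Boundary` at a
single boundary point, in any finite-dimensional inner product space. -/
def HasC2DefiningFunctionAt (Ω : Set E) (a : E) : Prop :=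
  ∃ f : E → ℝ, ∃ U ∈ 𝓝 a, ContDiffOn ℝ 2 f U ∧ (∀ y ∈ U, fderiv ℝ f y ≠ 0) ∧
    U ∩ Ω = U ∩ {y | f y < 0} ∧ U ∩ frontier Ω = U ∩ {y | f y = 0}

/-- On `V`, the function `ζ` is positive exactly in `Ω` and zero exactly on its frontier. -/
def IsDefiningFunctionOn (ζ : E → ℝ) (Ω V : Set E) : Prop :=
  ∀ x ∈ V, (x ∈ Ω ↔ 0 < ζ x) ∧ (x ∈ frontier Ω ↔ ζ x = 0)

/-- A function `ζ` with gradient field `Z` serving as a boundary-flattening coordinate near its zero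
`a`: it replaces the distance to the boundary, to which it is comparable. It increases at unit rate
at least in the direction `e`, and it is normalised to have Laplacian at most `-1`, so that it is a
strict supersolution of the Laplace equation. -/
structure BoundaryChart (a : E) (ρ L : ℝ) (ζ : E → ℝ) (Z : E → E) (e : E) : Prop where
  radius_pos : 0 < ρ
  one_le_const : 1 ≤ L
  norm_dir : ‖e‖ = 1
  map_center : ζ a = 0
  hasGradLaplacianAt : ∀ x ∈ ball a ρ, ∃ l ∈ Icc (-L) (-1), HasGradLaplacianAt ζ (Z x) l x
  one_le_inner : ∀ x ∈ ball a ρ, 1 ≤ ⟪Z x, e⟫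
  norm_gradient_le : ∀ x ∈ ball a ρ, ‖Z x‖ ≤ L
  norm_gradient_sub_le : ∀ x ∈ ball a ρ, ∀ y ∈ ball a ρ, ‖Z x - Z y‖ ≤ L * ‖x - y‖
  le_one : ∀ x ∈ ball a ρ, ζ x ≤ 1

namespace BoundaryChart

variable {a e x y h : E} {ρ L : ℝ} {ζ : E → ℝ} {Z : E → E} {Ω : Set E}

lemma mono (F : BoundaryChart a ρ L ζ Z e) {ρ' : ℝ} (h0 : 0 < ρ') (h : ρ' ≤ ρ) :
    BoundaryChart a ρ' L ζ Z e where
  __ := F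
  radius_pos := h0
  hasGradLaplacianAt x hx := F.hasGradLaplacianAt x (ball_subset_ball h hx)
  one_le_inner x hx := F.one_le_inner x (ball_subset_ball h hx)
  norm_gradient_le x hx := F.norm_gradient_le x (ball_subset_ball h hx)
  norm_gradient_sub_le x hx y hy :=
    F.norm_gradient_sub_le x (ball_subset_ball h hx) y (ball_subset_ball h hy)
  le_one x hx := F.le_one x (ball_subset_ball h hx)

lemma const_pos (F : BoundaryChart a ρ L ζ Z e) : 0 < L := one_pos.trans_le F.one_le_const

lemma div_four_mul_le (F : BoundaryChart a ρ L ζ Z e) : ρ / (4 * L) ≤ ρ / 4 :=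
  div_le_div_of_nonneg_left F.radius_pos.le four_pos (by linarith [F.one_le_const])

lemma hasGradientAt (F : BoundaryChart a ρ L ζ Z e) (hx : x ∈ ball a ρ) :
    HasGradientAt ζ (Z x) x :=
  let ⟨_, _, hl⟩ := F.hasGradLaplacianAt x hx
  hl.hasGradientAt

lemma continuousOn (F : BoundaryChart a ρ L ζ Z e) : ContinuousOn ζ (ball a ρ) :=
  fun _ hx => (F.hasGradientAt hx).hasFDerivAt.continuousAt.continuousWithinAt

lemma abs_sub_le (F : BoundaryChart a ρ L ζ Z e) (hx : x ∈ ball a ρ) (hy : y ∈ ball a ρ) :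
    |ζ x - ζ y| ≤ L * ‖x - y‖ :=
  (convex_ball a ρ).norm_image_sub_le_of_norm_hasFDerivWithin_le (𝕜 := ℝ)
    (fun _ hz => (F.hasGradientAt hz).hasFDerivAt.hasFDerivWithinAt)
    (fun z hz => by rw [LinearIsometryEquiv.norm_map]; exact F.norm_gradient_le z hz) hy hx

lemma le_mul_norm (F : BoundaryChart a ρ L ζ Z e) (hx : x ∈ ball a ρ) (hy : y ∈ ball a ρ)
    (hζy : ζ y = 0) : ζ x ≤ L * ‖x - y‖ := by
  simpa [hζy] using (le_abs_self _).trans (F.abs_sub_le hx hy)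

lemma abs_sub_sub_sub_le (F : BoundaryChart a ρ L ζ Z e) (hx : x ∈ ball a ρ) (hy : y ∈ ball a ρ)
    (hxh : x + h ∈ ball a ρ) (hyh : y + h ∈ ball a ρ) :
    |ζ (x + h) - ζ x - (ζ (y + h) - ζ y)| ≤ L * ‖h‖ * ‖x - y‖ := by
  have hconv : Convex ℝ (ball a ρ ∩ (fun z => z + h) ⁻¹' ball a ρ) :=
    (convex_ball a ρ).inter ((convex_ball a ρ).translate_preimage_left h)
  refine hconv.norm_image_sub_le_of_norm_hasFDerivWithin_le (𝕜 := ℝ)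
    (f := fun z => ζ (z + h) - ζ z) (f' := fun z => InnerProductSpace.toDual ℝ E (Z (z + h) - Z z))
    (fun z hz => ?_) (fun z hz => ?_) ⟨hy, hyh⟩ ⟨hx, hxh⟩
  · obtain ⟨l, -, hl⟩ := F.hasGradLaplacianAt z hz.1
    obtain ⟨l', -, hl'⟩ := F.hasGradLaplacianAt (z + h) hz.2
    exact ((hl'.comp_add_right h).sub hl).hasGradientAt.hasFDerivAt.hasFDerivWithinAt
  · rw [LinearIsometryEquiv.norm_map]
    simpa using F.norm_gradient_sub_le _ hz.2 _ hz.1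

lemma add_le_add_smul (F : BoundaryChart a ρ L ζ Z e) {σ : ℝ} (hσ : 0 ≤ σ) (hx : x ∈ ball a ρ)
    (hxσ : x + σ • e ∈ ball a ρ) : ζ x + σ ≤ ζ (x + σ • e) := by
  have hmem (t : ℝ) (ht : t ∈ Icc 0 1) : x + t • σ • e ∈ ball a ρ :=
    (convex_ball a ρ).add_smul_mem hx hxσ ht
  have hderiv (t : ℝ) (ht : t ∈ Icc 0 1) :
      HasDerivAt (fun t : ℝ => ζ (x + t • σ • e)) (σ * ⟪Z (x + t • σ • e), e⟫) t := by
    have hline : HasDerivAt (fun t : ℝ => x + t • σ • e) (σ • e) t := by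
      simpa using ((hasDerivAt_id t).smul_const (σ • e)).const_add x
    simpa [Function.comp_def, inner_smul_right] using
      (F.hasGradientAt (hmem t ht)).hasFDerivAt.comp_hasDerivAt t hline
  have hgrowth := (convex_Icc (0 : ℝ) 1).mul_sub_le_image_sub_of_le_deriv (C := σ)
    (fun t ht => (hderiv t ht).continuousAt.continuousWithinAt)
    (fun t ht => (hderiv t (interior_subset ht)).differentiableAt.differentiableWithinAt)
    (fun t ht => ?_) 0 (by simp) 1 (by simp) zero_le_one
  · simp only [sub_zero, mul_one, one_smul, zero_smul, add_zero] at hgrowth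
    linarith
  · rw [(hderiv t (interior_subset ht)).deriv]
    exact le_mul_of_one_le_right hσ (F.one_le_inner _ (hmem t (interior_subset ht)))

lemma mem_ball_of_norm_sub_lt (F : BoundaryChart a ρ L ζ Z e) (hx : ‖x - a‖ < ρ / (4 * L)) :
    x ∈ ball a ρ := by
  rw [mem_ball, dist_eq_norm]
  linarith [F.div_four_mul_le, F.radius_pos]

lemma le_div_four (F : BoundaryChart a ρ L ζ Z e) (hx : ‖x - a‖ < ρ / (4 * L)) :
    ζ x ≤ ρ / 4 := by
  calc ζ x ≤ L * ‖x - a‖ := F.le_mul_norm (F.mem_ball_of_norm_sub_lt hx)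
        (mem_ball_self F.radius_pos) F.map_center
    _ ≤ L * (ρ / (4 * L)) := mul_le_mul_of_nonneg_left hx.le F.const_pos.le
    _ = ρ / 4 := by field_simp [F.const_pos.ne']

lemma exists_foot (F : BoundaryChart a ρ L ζ Z e) (hx : ‖x - a‖ < ρ / (4 * L)) (hpos : 0 < ζ x) :
    ∃ b, ∃ τ ∈ Ioc 0 (ζ x), x = b + τ • e ∧ ζ b = 0 ∧
      ∀ σ ∈ Icc 0 τ, b + σ • e ∈ ball a (ρ / 2) := by
  have := F.radius_pos
  have hx4 : ‖x - a‖ < ρ / 4 := hx.trans_le F.div_four_mul_le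
  have hζx := F.le_div_four hx
  have hmem (σ : ℝ) (hσ : σ ∈ Icc 0 (ζ x)) : x - σ • e ∈ ball a (ρ / 2) := by
    have := norm_sub_le (x - a) (σ • e)
    rw [norm_smul, F.norm_dir, Real.norm_of_nonneg hσ.1, sub_right_comm] at this
    rw [mem_ball, dist_eq_norm]
    linarith [hσ.2]
  have hhalf : ball a (ρ / 2) ⊆ ball a ρ := ball_subset_ball (by linarith)
  have hend : ζ (x - ζ x • e) ≤ 0 := by
    have hxmem : x ∈ ball a (ρ / 2) := by simpa using hmem 0 ⟨le_rfl, hpos.le⟩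
    have := F.add_le_add_smul hpos.le (hhalf (hmem _ ⟨hpos.le, le_rfl⟩))
      (by rw [sub_add_cancel]; exact hhalf hxmem)
    rw [sub_add_cancel] at this
    linarith
  have hcont : ContinuousOn (fun σ : ℝ => ζ (x - σ • e)) (Icc 0 (ζ x)) :=
    F.continuousOn.comp (by fun_prop) fun σ hσ => hhalf (hmem σ hσ)
  obtain ⟨τ, hτ, hζτ⟩ : (0 : ℝ) ∈ (fun σ : ℝ => ζ (x - σ • e)) '' Icc 0 (ζ x) :=
    intermediate_value_Icc' hpos.le hcont ⟨hend, by simpa using hpos.le⟩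
  have hτ0 : τ ≠ 0 := by
    rintro rfl
    exact hpos.ne' (by simpa using hζτ)
  refine ⟨x - τ • e, τ, ⟨hτ.1.lt_of_ne' hτ0, hτ.2⟩, by simp, hζτ, fun σ hσ => ?_⟩
  have : x - τ • e + σ • e = x - (τ - σ) • e := by rw [sub_smul]; abel
  rw [this]
  exact hmem _ ⟨sub_nonneg.2 hσ.2, by linarith [hσ.1, hτ.2]⟩

lemma exists_foot_closedBall_subset (F : BoundaryChart a ρ L ζ Z e) (hx : ‖x - a‖ < ρ / (4 * L))
    (hpos : 0 < ζ x) :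
    ∃ b, ∃ τ ∈ Ioc 0 (ζ x), x = b + τ • e ∧ x ∈ closedBall b (ρ / 2) ∧
      closedBall b (ρ / 2) ⊆ ball a ρ := by
  obtain ⟨b, τ, hτ, hxb, -, hmem⟩ := F.exists_foot hx hpos
  have hb : dist b a < ρ / 2 := by simpa using hmem 0 ⟨le_rfl, hτ.1.le⟩
  have hxb' : dist x b = τ := by
    rw [hxb, dist_self_add_left, norm_smul, F.norm_dir, mul_one, Real.norm_of_nonneg hτ.1.le]
  exact ⟨b, τ, hτ, hxb, mem_closedBall.2 (by linarith [hτ.2, F.le_div_four hx, F.radius_pos]),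
    closedBall_subset_ball' (by linarith)⟩

lemma le_mul_infDist (F : BoundaryChart a ρ L ζ Z e) (hΩ : IsDefiningFunctionOn ζ Ω (ball a ρ))
    (hx : x ∈ ball a (ρ / 2)) : ζ x ≤ L * infDist x (frontier Ω) := by
  have hρ := F.radius_pos
  have ha : a ∈ ball a ρ := mem_ball_self hρ
  have hx' : x ∈ ball a ρ := ball_subset_ball (by linarith) hx
  rw [mul_comm, ← div_le_iff₀ F.const_pos, le_infDist ⟨a, (hΩ a ha).2.2 F.map_center⟩]
  intro b hb
  rw [div_le_iff₀' F.const_pos]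
  by_cases hbρ : b ∈ ball a ρ
  · rw [dist_eq_norm]
    exact F.le_mul_norm hx' hbρ ((hΩ b hbρ).2.1 hb)
  · calc ζ x ≤ L * dist x a := by
          rw [dist_eq_norm]; exact F.le_mul_norm hx' ha F.map_center
      _ ≤ L * dist x b := by
          refine mul_le_mul_of_nonneg_left ?_ F.const_pos.le
          rw [mem_ball, not_lt] at hbρ
          linarith [mem_ball.1 hx, dist_triangle_left b a x]

lemma infDist_le (F : BoundaryChart a ρ L ζ Z e) (hΩ : IsDefiningFunctionOn ζ Ω (ball a ρ))
    (hx : ‖x - a‖ < ρ / (4 * L)) (hpos : 0 < ζ x) : infDist x (frontier Ω) ≤ ζ x := by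
  obtain ⟨b, τ, hτ, hxb, hζb, hmem⟩ := F.exists_foot hx hpos
  have hb : b ∈ ball a ρ := by
    refine ball_subset_ball (by linarith [F.radius_pos]) (?_ : b ∈ ball a (ρ / 2))
    simpa using hmem 0 ⟨le_rfl, hτ.1.le⟩
  calc infDist x (frontier Ω) ≤ dist x b := infDist_le_dist_of_mem ((hΩ b hb).2.2 hζb)
    _ = τ := by
        rw [hxb, dist_eq_norm, add_sub_cancel_left, norm_smul, F.norm_dir, mul_one,
          Real.norm_of_nonneg hτ.1.le]
    _ ≤ ζ x := hτ.2

end BoundaryChart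

lemma exists_contDiffAt_hasGradLaplacianAt {g : E → ℝ} {a : E} (hg : ContDiffAt ℝ 2 g a) :
    ∃ (Z : E → E) (l : E → ℝ), ContDiffAt ℝ 1 Z a ∧ ContinuousAt l a ∧
      ∀ᶠ y in 𝓝 a, HasGradLaplacianAt g (Z y) (l y) y := by
  have hZ (y : E) (hy : ContDiffAt ℝ 2 g y) : ContDiffAt ℝ 1 (gradient g) y :=
    (InnerProductSpace.toDual ℝ E).symm.toContinuousLinearEquiv.contDiff.contDiffAt.comp y
      (hy.fderiv_right (by norm_num))
  have hnear : ∀ᶠ y in 𝓝 a, ContDiffAt ℝ 2 g y := hg.eventually (by simp)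
  refine ⟨gradient g, fun y => LinearMap.trace ℝ E (fderiv ℝ (gradient g) y), hZ a hg, ?_, ?_⟩
  · have htrace : Continuous fun A : E →L[ℝ] E => LinearMap.trace ℝ E A :=
      ((LinearMap.trace ℝ E).comp
        (ContinuousLinearMap.coeLM ℝ : (E →L[ℝ] E) →ₗ[ℝ] E →ₗ[ℝ] E)).continuous_of_finiteDimensional
    exact htrace.continuousAt.comp ((hZ a hg).fderiv_right (m := 0) (by norm_num)).continuousAt
  · filter_upwards [hnear.eventually_nhds] with y hy
    refine ⟨gradient g, fderiv ℝ (gradient g) y, ?_, ?_, rfl, rfl⟩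
    · filter_upwards [hy] with z hz using (hz.differentiableAt (by norm_num)).hasGradientAt
    · exact ((hZ y hy.self_of_nhds).differentiableAt (by norm_num)).hasFDerivAt

/- With `ζ = c (g - Q g²)`, the term `-2 c Q ‖∇g‖²` in `Δζ(a)` can be given any value. -/
lemma exists_normalized_defining_function {g : E → ℝ} {a : E} (hg : ContDiffAt ℝ 2 g a)
    (ha : g a = 0) (hne : fderiv ℝ g a ≠ 0) :
    ∃ ζ c : E → ℝ, ContDiffAt ℝ 2 ζ a ∧ ContinuousAt c a ∧ 0 < c a ∧ (∀ y, ζ y = c y * g y) ∧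
      ∃ q, ‖q‖ = 2 ∧ HasGradLaplacianAt ζ q (-2) a := by
  obtain ⟨Z, l, -, -, hnear⟩ := exists_contDiffAt_hasGradLaplacianAt hg
  have hjet := hnear.self_of_nhds
  set γ := ‖Z a‖
  have hγ : 0 < γ := by
    refine norm_pos_iff.2 fun hZa => hne ?_
    rw [hjet.hasGradientAt.hasFDerivAt.fderiv, hZa, map_zero]
  set Q := (l a + γ) / (2 * γ ^ 2) with hQ
  refine ⟨fun y => 2 / γ * (g y - Q * g y ^ 2), fun y => 2 / γ * (1 - Q * g y), ?_, ?_, ?_,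
    fun y => by ring, (2 / γ) • Z a, ?_, ?_⟩
  · fun_prop
  · have := hg.continuousAt
    fun_prop
  · simp [ha, hγ]
  · rw [norm_smul, Real.norm_of_nonneg (by positivity), div_mul_cancel₀ _ hγ.ne']
  · convert (hjet.sub (hjet.sq.const_mul Q)).const_mul (2 / γ) using 1
    · simp [ha]
    · rw [ha, hQ]; field_simp; ring

lemma exists_boundaryChart_of_contDiffAt {ζ : E → ℝ} {a q : E} (hζ : ContDiffAt ℝ 2 ζ a)
    (ha : ζ a = 0) (hq : ‖q‖ = 2) (hjet : HasGradLaplacianAt ζ q (-2) a) :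
    ∃ L Z e, ∀ᶠ ρ in 𝓝[>] 0, BoundaryChart a ρ L ζ Z e := by
  obtain ⟨Z, l, hZ, hl, hnear⟩ := exists_contDiffAt_hasGradLaplacianAt hζ
  obtain ⟨hZa, hla⟩ := hnear.self_of_nhds.unique hjet
  obtain ⟨K, t, ht, hLip⟩ := hZ.exists_lipschitzOnWith
  set e : E := (2⁻¹ : ℝ) • q
  have hdir : ∀ᶠ y in 𝓝 a, 1 < ⟪Z y, e⟫ := by
    refine (hZ.continuousAt.inner continuousAt_const).eventually (lt_mem_nhds ?_)
    simp only [hZa, e, real_inner_smul_right, real_inner_self_eq_norm_sq, hq]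
    norm_num
  have hnorm : ∀ᶠ y in 𝓝 a, ‖Z y‖ < 3 :=
    hZ.continuousAt.norm.eventually (gt_mem_nhds (by simp only [hZa, hq]; norm_num))
  have hlap : ∀ᶠ y in 𝓝 a, l y ∈ Ioo (-3) (-1) :=
    hl.eventually (Ioo_mem_nhds (by rw [hla]; norm_num) (by rw [hla]; norm_num))
  have hone : ∀ᶠ y in 𝓝 a, ζ y < 1 :=
    hζ.continuousAt.eventually (gt_mem_nhds (by rw [ha]; norm_num))
  obtain ⟨ρ₀, hρ₀, hball⟩ := Metric.eventually_nhds_iff_ball.1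
    (hdir.and <| hnorm.and <| hlap.and <| hone.and <| hnear.and ht)
  have h3 : (3 : ℝ) ≤ max 3 (K : ℝ) := le_max_left _ _
  suffices F : BoundaryChart a ρ₀ (max 3 K) ζ Z e by
    refine ⟨max 3 K, Z, e, ?_⟩
    filter_upwards [Ioc_mem_nhdsGT hρ₀] with ρ hρ using F.mono hρ.1 hρ.2
  refine ⟨hρ₀, by linarith, ?_, ha, fun y hy => ?_, fun y hy => (hball y hy).1.le,
    fun y hy => (hball y hy).2.1.le.trans h3, fun x hx y hy => ?_,
    fun y hy => (hball y hy).2.2.2.1.le⟩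
  · rw [norm_smul, hq]; norm_num
  · obtain ⟨-, -, hly, -, hj, -⟩ := hball y hy
    exact ⟨l y, ⟨by linarith [hly.1], hly.2.le⟩, hj⟩
  · rw [← dist_eq_norm, ← dist_eq_norm]
    refine (hLip.dist_le_mul x (hball x hx).2.2.2.2.2 y (hball y hy).2.2.2.2.2).trans ?_
    gcongr
    exact le_max_right _ _

lemma exists_boundaryChart {Ω : Set E} {a : E} (ha : a ∈ frontier Ω)
    (hΩ : HasC2DefiningFunctionAt Ω a) :
    ∃ ρ L ζ Z e, BoundaryChart a ρ L ζ Z e ∧ IsDefiningFunctionOn ζ Ω (ball a ρ) := by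
  obtain ⟨f, U, hU, hf, hf', hΩU, hfrU⟩ := hΩ
  have hsign (y : E) (hy : y ∈ U) : (y ∈ Ω ↔ f y < 0) ∧ (y ∈ frontier Ω ↔ f y = 0) :=
    ⟨by simpa [hy] using Set.ext_iff.1 hΩU y, by simpa [hy] using Set.ext_iff.1 hfrU y⟩
  have hfa : f a = 0 := (hsign a (mem_of_mem_nhds hU)).2.1 ha
  obtain ⟨ζ, c, hζ, hc, hca, hζf, q, hq, hjet⟩ := exists_normalized_defining_function
    (hf.contDiffAt hU).neg (neg_eq_zero.2 hfa) (by
      rw [fderiv_fun_neg]; exact neg_ne_zero.2 (hf' a (mem_of_mem_nhds hU)))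
  obtain ⟨L, Z, e, hchart⟩ := exists_boundaryChart_of_contDiffAt hζ (by simp [hζf, hfa]) hq hjet
  have hdef : ∀ᶠ ρ in 𝓝[>] 0, IsDefiningFunctionOn ζ Ω (ball a ρ) := by
    obtain ⟨ε, hε, hball⟩ := Metric.eventually_nhds_iff_ball.1
      ((hc.eventually (lt_mem_nhds hca)).and (show ∀ᶠ y in 𝓝 a, y ∈ U from hU))
    filter_upwards [Ioc_mem_nhdsGT hε] with ρ hρ y hy
    obtain ⟨hcy, hyU⟩ := hball y (ball_subset_ball hρ.2 hy)
    rw [(hsign y hyU).1, (hsign y hyU).2, hζf, mul_pos_iff_of_pos_left hcy, neg_pos, mul_eq_zero,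
      neg_eq_zero, or_iff_right hcy.ne']
    exact ⟨Iff.rfl, Iff.rfl⟩
  obtain ⟨ρ, hρ⟩ := (hchart.and hdef).exists
  exact ⟨ρ, L, ζ, Z, e, hρ⟩

end BoundaryChart

section Scaling

variable {p β c r : ℝ}

lemma exponent_bounds (hp : 2 < p) (hβ : β = 1 / (p - 1)) :
    0 < β ∧ β < 1 ∧ β * p = 1 + β := by
  have hp1 : 0 < p - 1 := by linarith
  refine ⟨hβ ▸ one_div_pos.2 hp1, hβ ▸ (div_lt_one hp1).2 (by linarith), ?_⟩
  rw [hβ]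
  field_simp
  ring

lemma mul_rpow_neg_rpow (hβp : β * p = 1 + β) (hc : 0 ≤ c) (hr : 0 ≤ r) :
    (c * r ^ (-β)) ^ p = c ^ p * r ^ (-1 - β) := by
  rw [Real.mul_rpow hc (Real.rpow_nonneg hr _), ← Real.rpow_mul hr, neg_mul, hβp,
    show -(1 + β) = -1 - β by ring]

lemma rpow_neg_eq_rpow_mul (hr : 0 < r) : r ^ (-β) = r ^ (-1 - β) * r := by
  rw [← Real.rpow_add_one hr.ne']
  ring_nf

lemma rpow_one_sub_eq_rpow_mul_sq (hr : 0 < r) : r ^ (1 - β) = r ^ (-1 - β) * r ^ 2 := by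
  rw [← Real.rpow_add_natCast hr.ne']
  norm_num
  ring_nf

lemma mul_rpow_neg_one_sub_rpow (hβp : β * p = 1 + β) (hc : 0 < c) :
    (c * c ^ (-1 - β)) ^ p = c ^ (-1 - β) := by
  rw [mul_comm, ← rpow_neg_eq_rpow_mul hc]
  simpa using mul_rpow_neg_rpow hβp zero_le_one hc.le

lemma eventually_nhdsGT_zero_lt_of_continuous {f : ℝ → ℝ} (hf : Continuous f) (h : f 0 < c) :
    ∀ᶠ r in 𝓝[>] 0, f r < c :=
  (hf.continuousAt.eventually_lt_const h).filter_mono nhdsWithin_le_nhds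

lemma eventually_nhdsGT_zero_lt_mul_rpow {d y : ℝ} (c : ℝ) (hd : 0 < d) (hy : y < 0) :
    ∀ᶠ r in 𝓝[>] 0, c < d * r ^ y :=
  ((tendsto_rpow_neg_nhdsGT_zero hy).const_mul_atTop hd).eventually_gt_atTop c

end Scaling

section LocalSolution

variable {E : Type*} [NormedAddCommGroup E] [InnerProductSpace ℝ E] [FiniteDimensional ℝ E]
  {a b e x : E} {ρ L p β C M N s B R : ℝ} {ζ : E → ℝ} {Z : E → E} {w : E → ℝ} {G : E → E}

/-- A function `w` with gradient field `G` solving `-Δw = |∇w|^p` up to an error at most `M`, on the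
part of a ball around `a` where the boundary coordinate `ζ` is positive, with zero boundary values
and with the size that the Bernstein estimate gives to `w` and `∇w`. The time slices of a solution
of the evolution equation are of this form. -/
structure LocalSolution (a : E) (ρ : ℝ) (ζ : E → ℝ) (p β C M : ℝ) (w : E → ℝ) (G : E → E) :
    Prop where
  continuousOn : ContinuousOn w {x ∈ ball a ρ | 0 ≤ ζ x}
  eq_zero : ∀ x ∈ ball a ρ, ζ x = 0 → w x = 0
  hasGradLaplacianAt : ∀ x ∈ ball a ρ, 0 < ζ x →
    ∃ l, HasGradLaplacianAt w (G x) l x ∧ |l + ‖G x‖ ^ p| ≤ M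
  norm_gradient_le : ∀ x ∈ ball a ρ, 0 < ζ x → ‖G x‖ ≤ C * ζ x ^ (-β)
  abs_le_rpow : ∀ x ∈ ball a ρ, 0 ≤ ζ x → |w x| ≤ C * ζ x ^ (1 - β)

lemma BoundaryChart.le_rpow_of_norm_gradient_le (F : BoundaryChart a ρ L ζ Z e) (hβ0 : 0 ≤ β)
    (hβ1 : β < 1) (hw : ContinuousOn w {x ∈ ball a ρ | 0 ≤ ζ x})
    (hw0 : ∀ x ∈ ball a ρ, ζ x = 0 → w x = 0)
    (hG : ∀ x ∈ ball a ρ, 0 < ζ x → HasGradientAt w (G x) x ∧ ‖G x‖ ≤ C * ζ x ^ (-β))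
    (hx : ‖x - a‖ < ρ / (4 * L)) (hpos : 0 < ζ x) : w x ≤ C / (1 - β) * ζ x ^ (1 - β) := by
  obtain ⟨b, τ, ⟨hτ0, hτζ⟩, rfl, hζb, hmem⟩ := F.exists_foot hx hpos
  have hball (σ : ℝ) (hσ : σ ∈ Icc 0 τ) : b + σ • e ∈ ball a ρ :=
    ball_subset_ball (by linarith [F.radius_pos]) (hmem σ hσ)
  have hb : b ∈ ball a ρ := by simpa using hball 0 ⟨le_rfl, hτ0.le⟩
  have hC : 0 ≤ C := nonneg_of_mul_nonneg_left
    ((norm_nonneg _).trans (hG _ (hball τ ⟨hτ0.le, le_rfl⟩) hpos).2) (Real.rpow_pos_of_pos hpos _)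
  have hζ (σ : ℝ) (hσ : σ ∈ Icc 0 τ) : σ ≤ ζ (b + σ • e) := by
    simpa [hζb] using F.add_le_add_smul hσ.1 hb (hball σ hσ)
  have hline (σ : ℝ) : HasDerivAt (fun σ : ℝ => b + σ • e) e σ := by
    simpa using ((hasDerivAt_id σ).smul_const e).const_add b
  have key := sub_le_rpow_of_hasDerivAt_le (C := C) hβ1 hτ0.le (k := fun σ => w (b + σ • e))
    (k' := fun σ => ⟪G (b + σ • e), e⟫)
    (hw.comp (by fun_prop) fun σ hσ => ⟨hball σ hσ, hσ.1.trans (hζ σ hσ)⟩)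
    (fun σ hσ => ?_) (fun σ hσ => ?_)
  · rw [zero_smul, add_zero, hw0 b hb hζb, sub_zero] at key
    have : 0 ≤ C / (1 - β) := div_nonneg hC (sub_pos.2 hβ1).le
    exact key.trans (by gcongr)
  · have hpos := hσ.1.trans_le (hζ σ (Ioo_subset_Icc_self hσ))
    simpa [Function.comp_def] using (hG _ (hball σ (Ioo_subset_Icc_self hσ))
      hpos).1.hasFDerivAt.comp_hasDerivAt σ (hline σ)
  · have hσζ := hζ σ (Ioo_subset_Icc_self hσ)
    calc ⟪G (b + σ • e), e⟫ ≤ ‖G (b + σ • e)‖ := by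
          simpa [F.norm_dir] using real_inner_le_norm (G (b + σ • e)) e
      _ ≤ C * ζ (b + σ • e) ^ (-β) :=
          (hG _ (hball σ (Ioo_subset_Icc_self hσ)) (hσ.1.trans_le hσζ)).2
      _ ≤ C * σ ^ (-β) := mul_le_mul_of_nonneg_left
          (Real.rpow_le_rpow_of_nonpos hσ.1 hσζ (neg_nonpos.2 hβ0)) hC

lemma BoundaryChart.abs_le_rpow_of_norm_gradient_le (F : BoundaryChart a ρ L ζ Z e) (hβ0 : 0 ≤ β)
    (hβ1 : β < 1) (hw : ContinuousOn w {x ∈ ball a ρ | 0 ≤ ζ x})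
    (hw0 : ∀ x ∈ ball a ρ, ζ x = 0 → w x = 0)
    (hG : ∀ x ∈ ball a ρ, 0 < ζ x → HasGradientAt w (G x) x ∧ ‖G x‖ ≤ C * ζ x ^ (-β))
    (hx : ‖x - a‖ < ρ / (4 * L)) (hζx : 0 ≤ ζ x) : |w x| ≤ C / (1 - β) * ζ x ^ (1 - β) := by
  have hxρ := F.mem_ball_of_norm_sub_lt hx
  rcases hζx.eq_or_lt with h0 | hpos
  · rw [hw0 x hxρ h0.symm, ← h0, Real.zero_rpow (sub_pos.2 hβ1).ne', abs_zero, mul_zero]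
  · refine abs_le'.2 ⟨F.le_rpow_of_norm_gradient_le hβ0 hβ1 hw hw0 hG hx hpos, ?_⟩
    refine F.le_rpow_of_norm_gradient_le (w := fun x => -w x) (G := fun x => -G x) hβ0 hβ1 hw.neg
      (fun x hx h0 => by rw [hw0 x hx h0, neg_zero]) (fun x hx hpos => ?_) hx hpos
    obtain ⟨hgrad, hle⟩ := hG x hx hpos
    refine ⟨?_, by rwa [norm_neg]⟩
    rw [hasGradientAt_iff_hasFDerivAt, map_neg]
    exact hgrad.hasFDerivAt.neg

/-- The barrier `N (2sζ - ζ²) + B|x - b|²` used on strips `{0 ≤ ζ ≤ s}` in a ball around `b`. -/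
def stripBarrier (ζ : E → ℝ) (N s B : ℝ) (b x : E) : ℝ :=
  N * (2 * s * ζ x - ζ x ^ 2) + B * ‖x - b‖ ^ 2

namespace BoundaryChart

lemma exists_hasGradLaplacianAt_stripBarrier (F : BoundaryChart a ρ L ζ Z e) (hN : 0 ≤ N)
    (hB : 0 ≤ B) (hx : x ∈ ball a ρ) (hζ : ζ x ∈ Icc 0 s) (hxb : ‖x - b‖ ≤ R) :
    ∃ q l, HasGradLaplacianAt (stripBarrier ζ N s B b) q l x ∧
      ‖q‖ ≤ 2 * N * s * L + 2 * B * R ∧ l ≤ 2 * Module.finrank ℝ E * B - 2 * N := by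
  obtain ⟨l, hl, hjet⟩ := F.hasGradLaplacianAt x hx
  have hq : N • ((2 * s) • Z x - (2 * ζ x) • Z x) + B • (2 : ℝ) • (x - b) =
      (2 * N * (s - ζ x)) • Z x + (2 * B) • (x - b) := by module
  refine ⟨_, _, (((hjet.const_mul (2 * s)).sub hjet.sq).const_mul N).add
    ((HasGradLaplacianAt.norm_sub_sq b).const_mul B), hq ▸ (norm_add_le _ _).trans ?_, ?_⟩
  · rw [norm_smul, norm_smul, Real.norm_of_nonneg (mul_nonneg two_pos.le hB),
      Real.norm_of_nonneg (mul_nonneg (mul_nonneg two_pos.le hN) (sub_nonneg.2 hζ.2))]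
    have hle : s - ζ x ≤ s := sub_le_self _ hζ.1
    have hs : 0 ≤ s := hζ.1.trans hζ.2
    gcongr
    exact F.norm_gradient_le x hx
  · have hnorm : 1 ≤ ‖Z x‖ := by
      simpa [F.norm_dir] using (F.one_le_inner x hx).trans (real_inner_le_norm _ _)
    have hstrict : 2 * s * l - (2 * ζ x * l + 2 * ‖Z x‖ ^ 2) ≤ -2 := by
      nlinarith [mul_nonneg (sub_nonneg.2 hζ.2) (by linarith [hl.2] : 0 ≤ -l)]
    linarith [mul_le_mul_of_nonneg_left hstrict hN]

lemma le_stripBarrier (F : BoundaryChart a ρ L ζ Z e) {v ψ : E → ℝ} (hN : 0 ≤ N) (hB : 0 ≤ B)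
    (hball : closedBall b R ⊆ ball a ρ) (hψ : ContinuousOn ψ (closedBall b R))
    (hψζ : ∀ x ∈ closedBall b R, ψ x ≤ ζ x)
    (hv : ContinuousOn v (closedBall b R ∩ {x | 0 ≤ ψ x}))
    (hzero : ∀ x ∈ closedBall b R, ψ x = 0 → v x ≤ 0)
    (htop : ∀ x ∈ closedBall b R, 0 ≤ ψ x → ζ x = s → v x ≤ N * s ^ 2)
    (hside : ∀ x ∈ sphere b R, 0 ≤ ψ x → ζ x ≤ s → v x ≤ B * R ^ 2)
    (hint : ∀ x ∈ ball b R, 0 < ψ x → ζ x < s → ∃ q l, HasGradLaplacianAt v q l x ∧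
      (‖q‖ ≤ 2 * N * s * L + 2 * B * R → 2 * Module.finrank ℝ E * B - 2 * N < l))
    (hx : x ∈ closedBall b R) (hψx : 0 ≤ ψ x) (hζx : ζ x ≤ s) :
    v x ≤ stripBarrier ζ N s B b x := by
  have hζ : ContinuousOn ζ (closedBall b R) := F.continuousOn.mono hball
  have hquad (y : E) : 0 ≤ B * ‖y - b‖ ^ 2 := by positivity
  have hlin {y : E} (hy : y ∈ closedBall b R) (h0 : 0 ≤ ψ y) (hs : ζ y ≤ s) :
      0 ≤ N * (2 * s * ζ y - ζ y ^ 2) :=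
    mul_nonneg hN (by nlinarith [h0.trans (hψζ y hy)])
  refine le_of_hasGradLaplacianAt (φ := fun y => min (ψ y) (s - ζ y)) (v := v)
    (B := stripBarrier ζ N s B b) (hψ.inf (continuousOn_const.sub hζ))
    (hv.mono <| inter_subset_inter_right _ fun y (hy : 0 ≤ min _ _) => show 0 ≤ ψ y from
      (le_min_iff.1 hy).1) ?_ (fun y hy h0 => ?_) (fun y hy h0 => ?_) (fun y hy hpos => ?_) x hx
    (le_min hψx (sub_nonneg.2 hζx))
  · have := hζ.mono (inter_subset_left (t := {x | 0 ≤ min (ψ x) (s - ζ x)}))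
    unfold stripBarrier
    fun_prop
  · obtain ⟨h0, hs⟩ := le_min_iff.1 h0
    have hnorm : ‖y - b‖ = R := by rwa [mem_sphere, dist_eq_norm] at hy
    rw [stripBarrier, hnorm]
    linarith [hside y hy h0 (sub_nonneg.1 hs), hlin (sphere_subset_closedBall hy) h0 (by linarith)]
  · rw [stripBarrier]
    rcases min_choice (ψ y) (s - ζ y) with h | h
    · have hψy : ψ y = 0 := h ▸ h0
      have hs : 0 ≤ s - ζ y := h0 ▸ min_le_right (ψ y) _
      linarith [hzero y hy hψy, hlin hy hψy.ge (sub_nonneg.1 hs), hquad y]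
    · have hs : ζ y = s := (sub_eq_zero.1 (h ▸ h0)).symm
      have hψy : 0 ≤ ψ y := h0 ▸ min_le_left _ _
      rw [hs]
      linarith [htop y hy hψy hs, hquad y]
  · obtain ⟨h0, hs⟩ := lt_min_iff.1 hpos
    obtain ⟨q, l, hjet, hlt⟩ := hint y hy h0 (sub_pos.1 hs)
    have hyR := ball_subset_closedBall hy
    obtain ⟨q', l', hjet', hq', hl'⟩ := F.exists_hasGradLaplacianAt_stripBarrier hN hB
      (hball hyR) ⟨h0.le.trans (hψζ y hyR), (sub_pos.1 hs).le⟩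
      (mem_closedBall_iff_norm.1 hyR)
    exact ⟨q, l, q', l', hjet, hjet', fun hqq' => hl'.trans_lt (hlt (hqq' ▸ hq'))⟩

lemma stripBarrier_add_smul_le (F : BoundaryChart a ρ L ζ Z e) {τ : ℝ} (hN : 0 ≤ N) (hB : 0 ≤ B)
    (hx : b + τ • e ∈ ball a ρ) (hτ : τ ∈ Icc 0 (ζ (b + τ • e))) :
    stripBarrier ζ N s B b (b + τ • e) ≤ (2 * N * s + B) * ζ (b + τ • e) := by
  have hone := F.le_one _ hx
  rw [stripBarrier, add_sub_cancel_left, norm_smul, F.norm_dir, mul_one,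
    Real.norm_of_nonneg hτ.1]
  have hsq : τ ^ 2 ≤ ζ (b + τ • e) := by nlinarith [hτ.1, hτ.2]
  nlinarith [mul_le_mul_of_nonneg_left hsq hB, mul_nonneg hN (sq_nonneg (ζ (b + τ • e)))]

end BoundaryChart

namespace LocalSolution

lemma abs_le_rpow_of_le (S : LocalSolution a ρ ζ p β C M w G) (hβ : β ≤ 1) (hC : 0 ≤ C)
    (hx : x ∈ ball a ρ) (h0 : 0 ≤ ζ x) (hs : ζ x ≤ s) : |w x| ≤ C * s ^ (1 - β) := by
  refine (S.abs_le_rpow x hx h0).trans ?_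
  gcongr

lemma exists_neg_mul_le (F : BoundaryChart a ρ L ζ Z e) (p : ℝ) (hβ : β ≤ 1) (hC : 0 ≤ C)
    (hM : 0 ≤ M) :
    ∃ A ≥ 0, ∀ w G, LocalSolution a ρ ζ p β C M w G →
      ∀ x, ‖x - a‖ < ρ / (4 * L) → 0 < ζ x → -(A * ζ x) ≤ w x := by
  have hρ := F.radius_pos
  set n : ℝ := (Module.finrank ℝ E : ℝ)
  have : 0 ≤ n := Nat.cast_nonneg _
  set B := 4 * C / ρ ^ 2
  have hB : 0 ≤ B := by positivity
  have hBR : B * (ρ / 2) ^ 2 = C := by simp only [B]; field_simp; ring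
  set N := C + n * B + M + 1
  have hN : 0 ≤ N := by positivity
  refine ⟨2 * N * 1 + B, by positivity, fun w G S x hx hpos => ?_⟩
  obtain ⟨b, τ, hτ, rfl, hxb, hball⟩ := F.exists_foot_closedBall_subset hx hpos
  have hxρ := hball hxb
  have hwC (y) (hy : y ∈ ball a ρ) (h0 : 0 ≤ ζ y) : -w y ≤ C :=
    (neg_le_abs _).trans <| by
      simpa using S.abs_le_rpow_of_le hβ hC hy h0 (F.le_one y hy)
  refine neg_le.1 (le_trans ?_ (F.stripBarrier_add_smul_le hN hB hxρ ⟨hτ.1.le, hτ.2⟩))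
  refine F.le_stripBarrier (ψ := ζ) (v := fun y => -w y) hN hB hball (F.continuousOn.mono hball)
    (fun _ _ => le_rfl) (S.continuousOn.mono fun y hy => ⟨hball hy.1, hy.2⟩).neg
    (fun y hy h0 => by rw [S.eq_zero y (hball hy) h0, neg_zero]) (fun y hy h0 _ => ?_)
    (fun y hy h0 _ => ?_) (fun y hy h0 _ => ?_) hxb hpos.le (F.le_one _ hxρ)
  · have : 0 ≤ n * B := by positivity
    linarith [hwC y (hball hy) h0]
  · rw [hBR]
    exact hwC y (hball (sphere_subset_closedBall hy)) h0
  · obtain ⟨l, hl, hle⟩ := S.hasGradLaplacianAt y (hball (ball_subset_closedBall hy)) h0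
    refine ⟨_, _, hl.neg, fun _ => ?_⟩
    have : 0 ≤ ‖G y‖ ^ p := by positivity
    linarith [(abs_le.1 hle).2]

end LocalSolution

end LocalSolution

section GradientBound

variable {E : Type*} [NormedAddCommGroup E] [InnerProductSpace ℝ E] [FiniteDimensional ℝ E]
  {a e x : E} {ρ L p β C M A η m κ r : ℝ} {ζ : E → ℝ} {Z : E → E} {w : E → ℝ} {G : E → E}

namespace LocalSolution

lemma const_nonneg (S : LocalSolution a ρ ζ p β C M w G) (hx : x ∈ ball a ρ) (hpos : 0 < ζ x) :
    0 ≤ C :=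
  nonneg_of_mul_nonneg_left ((norm_nonneg _).trans (S.norm_gradient_le x hx hpos))
    (Real.rpow_pos_of_pos hpos _)

lemma norm_gradient_rpow_le (S : LocalSolution a ρ ζ p β C M w G) (hp : 1 ≤ p)
    (hβp : β * p = 1 + β) (hx : x ∈ ball a ρ) (hpos : 0 < ζ x) :
    ‖G x‖ ^ p ≤ C ^ (p - 1) / ζ x * ‖G x‖ := by
  rcases (norm_nonneg (G x)).eq_or_lt with h0 | hG
  · rw [← h0, Real.zero_rpow (by linarith), mul_zero]
  · calc ‖G x‖ ^ p = ‖G x‖ ^ (p - 1) * ‖G x‖ := by rw [← Real.rpow_add_one hG.ne', sub_add_cancel]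
      _ ≤ (C * ζ x ^ (-β)) ^ (p - 1) * ‖G x‖ := by
          gcongr
          exact S.norm_gradient_le x hx hpos
      _ = C ^ (p - 1) / ζ x * ‖G x‖ := by
          rw [Real.mul_rpow (S.const_nonneg hx hpos) (by positivity), ← Real.rpow_mul hpos.le,
            show -β * (p - 1) = -1 by linarith, Real.rpow_neg_one, div_eq_mul_inv]

lemma norm_gradient_le_of_abs_le_mul (F : BoundaryChart a ρ L ζ Z e)
    (S : LocalSolution a ρ ζ p β C M w G) (hp : 1 ≤ p) (hβp : β * p = 1 + β) (hη : η ≤ ρ)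
    (hA : 0 ≤ A) (hw : ∀ y ∈ ball a η, 0 < ζ y → |w y| ≤ A * ζ y) (hx : x ∈ ball a (η / 2))
    (hpos : 0 < ζ x) :
    ‖G x‖ ≤ 4 * Module.finrank ℝ E * (3 * A * L) * (1 + C ^ (p - 1)) + M := by
  have hL := F.one_le_const
  have hη0 : 0 < η := by linarith [pos_of_mem_ball hx]
  have hxρ : x ∈ ball a ρ := ball_subset_ball (by linarith) hx
  have hC := S.const_nonneg hxρ hpos
  have hM : 0 ≤ M := (abs_nonneg _).trans (S.hasGradLaplacianAt x hxρ hpos).choose_spec.2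
  set d := ζ x / (2 * L) with hd
  have hd0 : 0 < d := by positivity
  have hζx : ζ x = 2 * L * d := by rw [hd]; field_simp
  have hdx : 2 * d ≤ ‖x - a‖ := by
    have := F.le_mul_norm hxρ (mem_ball_self F.radius_pos) F.map_center
    rw [hζx, mul_comm 2, mul_assoc] at this
    exact le_of_mul_le_mul_left this F.const_pos
  have hxη : ‖x - a‖ < η / 2 := by rwa [mem_ball, dist_eq_norm] at hx
  have hball : closedBall x d ⊆ ball a η := closedBall_subset_ball' (by rw [dist_eq_norm]; linarith)
  have hζ (y) (hy : y ∈ closedBall x d) : ζ y ∈ Icc (L * d) (3 * L * d) := by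
    have hyx := F.abs_sub_le (ball_subset_ball hη (hball hy)) hxρ
    have := abs_le.1 (hyx.trans
      (mul_le_mul_of_nonneg_left (mem_closedBall_iff_norm.1 hy) F.const_pos.le))
    constructor <;> linarith
  have hζpos (y) (hy : y ∈ closedBall x d) : 0 < ζ y :=
    (mul_pos F.const_pos hd0).trans_le (hζ y hy).1
  have key := norm_gradient_le_of_abs_laplacian_le (w := w) (G := G) (x₀ := x) (A := 3 * A * L)
    hd0 hM (Real.rpow_nonneg hC (p - 1)) (fun y hy => ?_) (fun y hy => ?_)
  · have hd1 : d ≤ 1 := by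
      have := F.le_one x hxρ
      nlinarith
    exact key.trans (add_le_add_right (mul_le_of_le_one_right hM hd1) _)
  · calc |w y| ≤ A * ζ y := hw y (hball hy) (hζpos y hy)
      _ ≤ A * (3 * L * d) := mul_le_mul_of_nonneg_left (hζ y hy).2 hA
      _ = 3 * A * L * d := by ring
  · have hyρ := ball_subset_ball hη (hball hy)
    obtain ⟨l, hjet, hl⟩ := S.hasGradLaplacianAt y hyρ (hζpos y hy)
    have hGy : ‖G y‖ ^ p ≤ C ^ (p - 1) / d * ‖G y‖ := by
      refine (S.norm_gradient_rpow_le hp hβp hyρ (hζpos y hy)).trans ?_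
      gcongr
      exact (le_mul_of_one_le_left hd0.le hL).trans (hζ y hy).1
    have hGp : 0 ≤ ‖G y‖ ^ p := by positivity
    exact ⟨l, hjet, abs_le.2 ⟨by linarith [(abs_le.1 hl).1], by linarith [(abs_le.1 hl).2]⟩⟩

lemma le_mul_of_le_on_level (F : BoundaryChart a ρ L ζ Z e)
    (S : LocalSolution a ρ ζ p β C M w G) (hp : 0 ≤ p) (hβ : β ≤ 1) (hβp : β * p = 1 + β)
    (hm : 0 ≤ m) (hκ : 0 < κ) (hr : 0 < r) (hrρ : r ≤ ρ) (hmL : (7 * L * m) ^ p ≤ m)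
    (hκn : 8 * Module.finrank ℝ E * C * κ ^ 2 ≤ m) (hκL : 4 * C * κ ≤ m * L)
    (hM : M < 4 * m * (κ * r) ^ (-1 - β))
    (hlevel : ∀ y ∈ ball a r, ζ y = κ * r → w y ≤ 3 * m * (κ * r) ^ (1 - β))
    (hx : ‖x - a‖ < r / (4 * L)) (hxs : ζ x ≤ κ * r) (hpos : 0 < ζ x) :
    w x ≤ (6 * m * κ * r + 4 * C * κ ^ 2) * (κ * r) ^ (-1 - β) * ζ x := by
  have Fr := F.mono hr hrρ
  have hsub : ball a r ⊆ ball a ρ := ball_subset_ball hrρ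
  have hC : 0 ≤ C := S.const_nonneg (hsub (Fr.mem_ball_of_norm_sub_lt hx)) hpos
  set s := κ * r with hs
  have hs0 : 0 < s := by positivity
  set X := s ^ (-1 - β)
  have hX0 : 0 ≤ X := by positivity
  have hXs2 : s ^ (1 - β) = X * s ^ 2 := rpow_one_sub_eq_rpow_mul_sq hs0
  have hXs : s ^ (-β) = X * s := rpow_neg_eq_rpow_mul hs0
  obtain ⟨b, τ, hτ, rfl, hxb, hball⟩ := Fr.exists_foot_closedBall_subset hx hpos
  have hN : 0 ≤ 3 * m * X := by positivity
  have hB : 0 ≤ 4 * C * κ ^ 2 * X := by positivity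
  have hBR : 4 * C * κ ^ 2 * X * (r / 2) ^ 2 = C * s ^ (1 - β) := by rw [hXs2, hs]; ring
  have hGp {q : ℝ} (hq0 : 0 ≤ q)
      (hq : q ≤ 2 * (3 * m * X) * s * L + 2 * (4 * C * κ ^ 2 * X) * (r / 2)) : q ^ p ≤ m * X := by
    have hq7 : q ≤ 7 * L * m * s ^ (-β) := by
      have : 4 * C * κ * (X * s) ≤ m * L * (X * s) := by gcongr
      rw [hXs]
      linear_combination hq + this + 4 * C * κ * X * hs
    calc q ^ p ≤ (7 * L * m * s ^ (-β)) ^ p := Real.rpow_le_rpow hq0 hq7 hp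
      _ = (7 * L * m) ^ p * X :=
        mul_rpow_neg_rpow hβp (by have := F.const_pos; positivity) hs0.le
      _ ≤ m * X := by gcongr
  refine le_trans ?_ ((Fr.stripBarrier_add_smul_le (s := s) hN hB
    (hball hxb) ⟨hτ.1.le, hτ.2⟩).trans_eq (by rw [hs]; ring))
  refine Fr.le_stripBarrier (ψ := ζ) hN hB hball (Fr.continuousOn.mono hball)
    (fun _ _ => le_rfl) (S.continuousOn.mono fun y hy => ⟨hsub (hball hy.1), hy.2⟩)
    (fun y hy h0 => (S.eq_zero y (hsub (hball hy)) h0).le) (fun y hy _ hys => ?_)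
    (fun y hy h0 hys => ?_) (fun y hy h0 _ => ?_) hxb hpos.le hxs
  · exact (hlevel y (hball hy) hys).trans_eq (by rw [hXs2]; ring)
  · rw [hBR]
    exact (le_abs_self _).trans
      (S.abs_le_rpow_of_le hβ hC (hsub (hball (sphere_subset_closedBall hy))) h0 hys)
  · obtain ⟨l, hjet, hl⟩ :=
      S.hasGradLaplacianAt y (hsub (hball (ball_subset_closedBall hy))) h0
    refine ⟨_, _, hjet, fun hq => ?_⟩
    have := mul_le_mul_of_nonneg_right hκn hX0
    linarith [(abs_le.1 hl).1, hGp (norm_nonneg _) hq]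

lemma exists_forall_eventually_norm_gradient_le (F : BoundaryChart a ρ L ζ Z e) (hp : 1 ≤ p)
    (hβ0 : 0 ≤ β) (hβ1 : β ≤ 1) (hβp : β * p = 1 + β) (hC : 0 ≤ C) (hM : 0 ≤ M) :
    ∃ m > 0, ∀ᶠ κ in 𝓝[>] (0 : ℝ), ∀ᶠ r in 𝓝[>] (0 : ℝ), ∃ B, ∃ η > 0,
      ∀ w G, LocalSolution a ρ ζ p β C M w G →
        (∀ y ∈ ball a r, ζ y = κ * r → w y ≤ 3 * m * (κ * r) ^ (1 - β)) →
        ∀ x ∈ ball a η, 0 < ζ x → ‖G x‖ ≤ B := by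
  have hL := F.const_pos
  have hρ := F.radius_pos
  obtain ⟨A₁, hA₁, hlower⟩ := exists_neg_mul_le F p hβ1 hC hM
  set m := (7 * L) ^ (-1 - β)
  have hm : 0 < m := by positivity
  refine ⟨m, hm, ?_⟩
  have hκn : ∀ᶠ κ in 𝓝[>] (0 : ℝ), 8 * Module.finrank ℝ E * C * κ ^ 2 < m :=
    eventually_nhdsGT_zero_lt_of_continuous (by fun_prop) (by simpa)
  have hκL : ∀ᶠ κ in 𝓝[>] (0 : ℝ), 4 * C * κ < m * L :=
    eventually_nhdsGT_zero_lt_of_continuous (by fun_prop) (by simpa using mul_pos hm hL)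
  filter_upwards [hκn, hκL, self_mem_nhdsWithin] with κ hκn hκL (hκ : 0 < κ)
  have hMr : ∀ᶠ r in 𝓝[>] (0 : ℝ), M < 4 * m * (κ * r) ^ (-1 - β) :=
    eventually_nhdsGT_zero_mul_left hκ
      (eventually_nhdsGT_zero_lt_mul_rpow M (by positivity) (by linarith))
  filter_upwards [hMr, self_mem_nhdsWithin, Ioo_mem_nhdsGT hρ] with r hMr (hr : 0 < r) hrρ
  set A := max A₁ ((6 * m * κ * r + 4 * C * κ ^ 2) * (κ * r) ^ (-1 - β))
  have hA : 0 ≤ A := hA₁.trans (le_max_left _ _)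
  set η := min (r / (4 * L)) (κ * r / L)
  have : 0 < η := by positivity
  have hηr : η ≤ ρ / (4 * L) := (min_le_left _ _).trans (by gcongr; exact hrρ.2.le)
  have hηρ : η ≤ ρ := by linarith [F.div_four_mul_le]
  refine ⟨_, η / 2, by positivity, fun w G S hlevel x hx hpos =>
    S.norm_gradient_le_of_abs_le_mul F hp hβp hηρ hA ?_ hx hpos⟩
  intro y hy hypos
  rw [mem_ball, dist_eq_norm] at hy
  have hys : ζ y ≤ κ * r := by
    refine (F.le_mul_norm (F.mem_ball_of_norm_sub_lt (hy.trans_le hηr)) (mem_ball_self hρ)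
      F.map_center).trans ?_
    rw [mul_comm, ← le_div_iff₀ hL]
    exact hy.le.trans (min_le_right _ _)
  have hupper := S.le_mul_of_le_on_level F (by linarith) hβ1 hβp hm.le hκ hr hrρ.2.le
    (mul_rpow_neg_one_sub_rpow hβp (by positivity)).le hκn.le hκL.le hMr hlevel
    (hy.trans_le (min_le_left _ _)) hys hypos
  have hle := hlower w G S y (hy.trans_le hηr) hypos
  refine abs_le.2 ⟨?_, hupper.trans (mul_le_mul_of_nonneg_right (le_max_right _ _) hypos.le)⟩
  linarith [mul_le_mul_of_nonneg_right (le_max_left A₁ _ : A₁ ≤ A) hypos.le]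

end LocalSolution

end GradientBound

section TranslationParameters

variable {n p α β L M r ε σ Λ : ℝ}

lemma barrier_slack_of_scaling (hn : 0 ≤ n) (hp : 1 ≤ p) (hβp : β * p = 1 + β) (hL : 1 ≤ L)
    (hσ : 0 < σ) (hΛ : 2 * (n + 1) * L * σ ≤ Λ) (hr : 0 < r) (hα : 0 < α)
    (hM : 2 * M < α * (3 * Λ) ^ (-1 - β) * r ^ (-1 - β)) :
    α * (2 * n * ((3 * Λ) ^ (-1 - β) * r ^ (-1 - β)) +
      (2 * ((n + 1) * (3 * Λ) ^ (-1 - β) * r ^ (-1 - β)) * (σ * r) * L +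
        2 * ((3 * Λ) ^ (-1 - β) * r ^ (-1 - β)) * (Λ * r)) ^ p) + 2 * M <
      2 * (α * ((n + 1) * (3 * Λ) ^ (-1 - β) * r ^ (-1 - β))) := by
  have hΛ0 : 0 < Λ := lt_of_lt_of_le (by positivity) hΛ
  have hpow : (2 * ((n + 1) * (3 * Λ) ^ (-1 - β) * r ^ (-1 - β)) * (σ * r) * L +
      2 * ((3 * Λ) ^ (-1 - β) * r ^ (-1 - β)) * (Λ * r)) ^ p ≤
      (3 * Λ) ^ (-1 - β) * r ^ (-1 - β) := by
    have hroot := mul_rpow_neg_rpow hβp (show 0 ≤ 3 * Λ * (3 * Λ) ^ (-1 - β) by positivity) hr.le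
    rw [mul_rpow_neg_one_sub_rpow hβp (by positivity), rpow_neg_eq_rpow_mul hr] at hroot
    refine (Real.rpow_le_rpow (by positivity) ?_ (by linarith)).trans_eq hroot
    have := mul_le_mul_of_nonneg_left hΛ
      (show 0 ≤ (3 * Λ) ^ (-1 - β) * (r ^ (-1 - β) * r) by positivity)
    linear_combination this
  linear_combination α * hpow + hM

lemma exists_translation_parameters (n C L : ℝ) (hn : 0 ≤ n) (hβ0 : 0 < β) (hβ1 : β < 1)
    (hL : 1 ≤ L) (hε : 0 < ε) :
    ∃ σ α Λ, 8 * L ≤ σ ∧ 0 < α ∧ α ≤ 1 ∧ 2 * (n + 1) * L * σ ≤ Λ ∧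
      4 * C * (σ / 2) ^ (-β) + α * (C * σ ^ (1 - β)) ≤ ε ∧
      2 * C * (2 * σ) ^ (1 - β) ≤ α * (3 * Λ) ^ (-1 - β) * Λ ^ 2 ∧
      α * (C + 2 * (n + 1) * (3 * Λ) ^ (-1 - β) * σ) ≤ ε := by
  have hσ_decay : Tendsto (fun σ : ℝ => 4 * C * (σ / 2) ^ (-β)) atTop (𝓝 (4 * C * 0)) :=
    ((tendsto_rpow_neg_atTop hβ0).comp (tendsto_id.atTop_div_const two_pos)).const_mul _
  obtain ⟨σ, hσε, hσL⟩ := ((hσ_decay.eventually_lt_const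
    (by simpa using half_pos hε : 4 * C * 0 < ε / 2)).and (eventually_ge_atTop (8 * L))).exists
  obtain ⟨α, ⟨h1, h2, hα1⟩, hα0⟩ := (((eventually_nhdsGT_zero_lt_of_continuous
      (f := fun α => α * (C * σ ^ (1 - β))) (c := ε / 2) (by fun_prop) (by simpa using hε)).and
    ((eventually_nhdsGT_zero_lt_of_continuous (f := fun α => α * (C + 2 * (n + 1) * σ))
      (c := ε) (by fun_prop) (by simpa using hε)).and
    (eventually_nhdsGT_zero_lt_of_continuous (f := fun α => α) (c := 1) (by fun_prop)
      one_pos))).and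
    self_mem_nhdsWithin).exists
  have hα0 : 0 < α := hα0
  have hgrowth : Tendsto (fun Λ : ℝ => α * 3 ^ (-1 - β) * Λ ^ (1 - β)) atTop atTop :=
    (tendsto_rpow_atTop (sub_pos.2 hβ1)).const_mul_atTop (by positivity)
  obtain ⟨Λ, ⟨hΛC, hΛσ⟩, hΛ1⟩ := (((hgrowth.eventually_ge_atTop (2 * C * (2 * σ) ^ (1 - β))).and
    (eventually_ge_atTop (2 * (n + 1) * L * σ))).and (eventually_ge_atTop 1)).exists
  have hk : (3 * Λ) ^ (-1 - β) ≤ 1 :=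
    Real.rpow_le_one_of_one_le_of_nonpos (by linarith) (by linarith)
  refine ⟨σ, α, Λ, hσL, hα0, hα1.le, hΛσ, by linarith, hΛC.trans_eq ?_, ?_⟩
  · rw [rpow_one_sub_eq_rpow_mul_sq (by linarith), Real.mul_rpow (by norm_num) (by linarith)]
    ring
  · have := mul_le_mul_of_nonneg_left hk (show 0 ≤ α * (2 * (n + 1) * σ) by
      have : 0 ≤ σ := by linarith
      positivity)
    linarith

end TranslationParameters

section Translation

variable {E : Type*} [NormedAddCommGroup E] [InnerProductSpace ℝ E] [FiniteDimensional ℝ E]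
  {a b e h x : E} {ρ L p α β C M N s B R θ ε r σ Λ : ℝ} {ζ : E → ℝ} {Z : E → E} {w : E → ℝ}
  {G : E → E}

namespace LocalSolution

lemma sub_le_mul_norm (F : BoundaryChart a ρ L ζ Z e) (S : LocalSolution a ρ ζ p β C M w G)
    (hβ : 0 ≤ β) (hx : x ∈ ball a ρ) (hxh : x + h ∈ ball a ρ) (hpos : 0 < ζ x)
    (hh : L * ‖h‖ ≤ ζ x / 2) : w (x + h) - w x ≤ C * (ζ x / 2) ^ (-β) * ‖h‖ := by
  have hC := S.const_nonneg hx hpos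
  have hseg (y) (hy : y ∈ segment ℝ x (x + h)) : y ∈ ball a ρ ∧ ζ x / 2 ≤ ζ y := by
    have hyρ := (convex_ball a ρ).segment_subset hx hxh hy
    have hyx : ‖x - y‖ ≤ ‖h‖ := by
      simpa [norm_sub_rev x] using mem_closedBall_iff_norm.1 (segment_subset_closedBall_left _ _ hy)
    have := (abs_le.1 (F.abs_sub_le hx hyρ)).2
    exact ⟨hyρ, by linarith [mul_le_mul_of_nonneg_left hyx F.const_pos.le]⟩
  have key := (convex_segment x (x + h)).norm_image_sub_le_of_norm_hasFDerivWithin_le (𝕜 := ℝ)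
    (f := w) (f' := fun y => InnerProductSpace.toDual ℝ E (G y)) (C := C * (ζ x / 2) ^ (-β))
    (fun y hy => ?_) (fun y hy => ?_) (left_mem_segment ℝ x (x + h)) (right_mem_segment ℝ x (x + h))
  · rw [add_sub_cancel_left] at key
    exact (le_abs_self _).trans key
  · obtain ⟨l, hl, -⟩ := S.hasGradLaplacianAt y (hseg y hy).1 (by linarith [(hseg y hy).2])
    exact hl.hasGradientAt.hasFDerivAt.hasFDerivWithinAt
  · rw [LinearIsometryEquiv.norm_map]
    refine (S.norm_gradient_le y (hseg y hy).1 (by linarith [(hseg y hy).2])).trans ?_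
    exact mul_le_mul_of_nonneg_left
      (Real.rpow_le_rpow_of_nonpos (by positivity) (hseg y hy).2 (neg_nonpos.2 hβ)) hC

lemma exists_hasGradLaplacianAt_translate_sub (S : LocalSolution a ρ ζ p β C M w G) (hp : 1 ≤ p)
    (hα0 : 0 < α) (hα1 : α ≤ 1) (hx : x ∈ ball a ρ) (hpos : 0 < ζ x) (hxh : x + h ∈ ball a ρ)
    (hposh : 0 < ζ (x + h)) :
    ∃ q l, HasGradLaplacianAt (fun y => w (y + h) - (1 - α) * w y - ε) q l x ∧
      ∀ D, ‖q‖ ≤ α * D → -(α * D ^ p) - 2 * M ≤ l := by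
  obtain ⟨l, hjet, hl⟩ := S.hasGradLaplacianAt x hx hpos
  obtain ⟨l', hjet', hl'⟩ := S.hasGradLaplacianAt (x + h) hxh hposh
  have hM : 0 ≤ M := (abs_nonneg _).trans hl
  refine ⟨_, _, (hjet'.comp_add_right h |>.sub (hjet.const_mul (1 - α))).sub (.const ε), ?_⟩
  intro D hD
  set q := α⁻¹ • (G (x + h) - (1 - α) • G x) with hq
  have hqD : ‖q‖ ≤ D := by
    rw [hq, norm_smul, norm_inv, Real.norm_of_nonneg hα0.le, inv_mul_le_iff₀ hα0]
    simpa using hD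
  have hcomb : (1 - α) • G x + α • q = G (x + h) := by rw [hq, smul_inv_smul₀ hα0.ne']; abel
  have hconv := (convexOn_norm_rpow hp).2 (mem_univ (G x)) (mem_univ q) (sub_nonneg.2 hα1) hα0.le
    (by ring)
  simp only [hcomb, smul_eq_mul] at hconv
  have hpow : α * ‖q‖ ^ p ≤ α * D ^ p := by gcongr
  have hlow := mul_le_mul_of_nonneg_left (abs_le.1 hl).2 (sub_nonneg.2 hα1)
  have := mul_nonneg hα0.le hM
  linarith [(abs_le.1 hl').1]

lemma continuousOn_translate_sub (F : BoundaryChart a ρ L ζ Z e)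
    (S : LocalSolution a ρ ζ p β C M w G)
    (hball : ∀ x ∈ closedBall b R, x ∈ ball a ρ ∧ x + h ∈ ball a ρ) :
    ContinuousOn (fun x => min (ζ x) (ζ (x + h))) (closedBall b R) ∧
      ContinuousOn (fun x => w (x + h) - (1 - α) * w x - ε)
        (closedBall b R ∩ {x | 0 ≤ min (ζ x) (ζ (x + h))}) := by
  have htrans : Continuous (fun y => y + h) := by fun_prop
  refine ⟨(F.continuousOn.mono fun y hy => (hball y hy).1).inf
    (F.continuousOn.comp htrans.continuousOn fun y hy => (hball y hy).2), ?_⟩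
  have hw : ContinuousOn w (closedBall b R ∩ {x | 0 ≤ min (ζ x) (ζ (x + h))}) :=
    S.continuousOn.mono fun y hy => ⟨(hball y hy.1).1, (le_min_iff.1 hy.2).1⟩
  have hwh : ContinuousOn (fun x => w (x + h))
      (closedBall b R ∩ {x | 0 ≤ min (ζ x) (ζ (x + h))}) :=
    S.continuousOn.comp htrans.continuousOn fun y hy =>
      ⟨(hball y hy.1).2, (le_min_iff.1 hy.2).2⟩
  exact (hwh.sub (continuousOn_const.mul hw)).sub continuousOn_const

lemma translate_sub_le (S : LocalSolution a ρ ζ p β C M w G) (hβ : β ≤ 1) (hC : 0 ≤ C)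
    (hα0 : 0 ≤ α) (hα1 : α ≤ 1) (hx : x ∈ ball a ρ) (hxh : x + h ∈ ball a ρ)
    (hmin : 0 ≤ min (ζ x) (ζ (x + h))) (hs : max (ζ x) (ζ (x + h)) ≤ s) :
    w (x + h) - (1 - α) * w x ≤ 2 * (C * s ^ (1 - β)) := by
  obtain ⟨h0, h0h⟩ := le_min_iff.1 hmin
  obtain ⟨h1, h1h⟩ := max_le_iff.1 hs
  have hwx := S.abs_le_rpow_of_le hβ hC hx h0 h1
  have hwh := (le_abs_self _).trans (S.abs_le_rpow_of_le hβ hC hxh h0h h1h)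
  nlinarith [neg_le_abs (w x), abs_nonneg (w x)]

lemma translate_sub_le_of_min_eq_zero (S : LocalSolution a ρ ζ p β C M w G) (hβ : β ≤ 1)
    (hC : 0 ≤ C) (hα0 : 0 ≤ α) (hα1 : α ≤ 1) (hx : x ∈ ball a ρ) (hxh : x + h ∈ ball a ρ)
    (hmin : min (ζ x) (ζ (x + h)) = 0) (hθ : |ζ (x + h) - ζ x| ≤ θ) :
    w (x + h) - (1 - α) * w x ≤ C * θ ^ (1 - β) := by
  obtain ⟨hθ1, hθ2⟩ := abs_le.1 hθ
  rcases min_choice (ζ x) (ζ (x + h)) with heq | heq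
  · have h0 : ζ x = 0 := heq ▸ hmin
    have hwh := S.abs_le_rpow_of_le (s := θ) hβ hC hxh (hmin ▸ min_le_right _ _) (by linarith)
    rw [S.eq_zero x hx h0, mul_zero, sub_zero]
    exact (le_abs_self _).trans hwh
  · have h0 : ζ (x + h) = 0 := heq ▸ hmin
    have hwx := S.abs_le_rpow_of_le (s := θ) hβ hC hx (hmin ▸ min_le_left _ _) (by linarith)
    rw [S.eq_zero _ hxh h0]
    nlinarith [neg_le_abs (w x), abs_nonneg (w x)]

lemma translate_sub_le_of_mul_norm_le (F : BoundaryChart a ρ L ζ Z e)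
    (S : LocalSolution a ρ ζ p β C M w G) (hβ : 0 ≤ β) (hα : 0 ≤ α) (hx : x ∈ ball a ρ)
    (hxh : x + h ∈ ball a ρ) (hpos : 0 < ζ x) (hh : L * ‖h‖ ≤ ζ x / 2) :
    w (x + h) - (1 - α) * w x ≤ C * (ζ x / 2) ^ (-β) * ‖h‖ + α * (C * ζ x ^ (1 - β)) := by
  have hws := mul_le_mul_of_nonneg_left ((le_abs_self _).trans (S.abs_le_rpow x hx hpos.le)) hα
  linarith [S.sub_le_mul_norm F hβ hx hxh hpos hh]

lemma translate_le_of_stripBarrier (F : BoundaryChart a ρ L ζ Z e)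
    (S : LocalSolution a ρ ζ p β C M w G) (hp : 1 ≤ p) (hβ0 : 0 ≤ β) (hβ1 : β ≤ 1)
    (hα0 : 0 < α) (hα1 : α ≤ 1) (hN : 0 ≤ N) (hB : 0 ≤ B) (hs : 0 < s) (hR : 0 ≤ R)
    (hball : ∀ x ∈ closedBall b R, x ∈ ball a ρ ∧ x + h ∈ ball a ρ)
    (hθ : ∀ x ∈ closedBall b R, |ζ (x + h) - ζ x| ≤ θ) (hθε : C * θ ^ (1 - β) ≤ ε)
    (hh : L * ‖h‖ ≤ s / 2) (htop : C * (s / 2) ^ (-β) * ‖h‖ + α * (C * s ^ (1 - β)) ≤ ε)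
    (hside : 2 * (C * (s + θ) ^ (1 - β)) ≤ α * B * R ^ 2)
    (hstrict : α * (2 * Module.finrank ℝ E * B + (2 * N * s * L + 2 * B * R) ^ p) + 2 * M <
      2 * (α * N))
    (hpos : 0 < ζ b) (hposh : 0 ≤ ζ (b + h)) (hζs : ζ b ≤ s) :
    w (b + h) ≤ (1 - α) * w b + 2 * (α * N) * s * ζ b + ε := by
  have hb : b ∈ closedBall b R := mem_closedBall_self hR
  have hC := S.const_nonneg (hball b hb).1 hpos
  have hθ0 : 0 ≤ θ := (abs_nonneg _).trans (hθ b hb)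
  have hε : 0 ≤ ε := le_trans (by positivity) hθε
  obtain ⟨hψ, hv⟩ := S.continuousOn_translate_sub F (α := α) (ε := ε) hball
  have key := F.le_stripBarrier (s := s) (mul_nonneg hα0.le hN) (mul_nonneg hα0.le hB)
    (fun y hy => (hball y hy).1) hψ (fun _ _ => min_le_left _ _) hv (fun y hy h0 => ?_)
    (fun y hy _ hys => ?_) (fun y hy h0 hys => ?_) (fun y hy h0 _ => ?_)
    hb (le_min hpos.le hposh) hζs
  · rw [stripBarrier, sub_self, norm_zero] at key
    have := mul_nonneg (mul_nonneg hα0.le hN) (sq_nonneg (ζ b))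
    linarith
  · linarith [S.translate_sub_le_of_min_eq_zero hβ1 hC hα0.le hα1 (hball y hy).1 (hball y hy).2
      h0 (hθ y hy)]
  · subst hys
    have : 0 ≤ α * N * ζ y ^ 2 := by positivity
    linarith [S.translate_sub_le_of_mul_norm_le F hβ0 hα0.le (hball y hy).1 (hball y hy).2 hs hh]
  · have hy' := sphere_subset_closedBall hy
    have hmax : max (ζ y) (ζ (y + h)) ≤ s + θ :=
      max_le (by linarith) (by linarith [abs_le.1 (hθ y hy')])
    linarith [S.translate_sub_le hβ1 hC hα0.le hα1 (hball y hy').1 (hball y hy').2 h0 hmax]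
  · have hy' := hball y (ball_subset_closedBall hy)
    obtain ⟨h1, h2⟩ := lt_min_iff.1 h0
    obtain ⟨q, l, hjet, hl⟩ :=
      S.exists_hasGradLaplacianAt_translate_sub (ε := ε) hp hα0 hα1 hy'.1 h1 hy'.2 h2
    exact ⟨q, l, hjet, fun hq => by linarith [hl (2 * N * s * L + 2 * B * R) (by linarith)]⟩

lemma translate_le_of_scaling (F : BoundaryChart a ρ L ζ Z e)
    (S : LocalSolution a ρ ζ p β C M w G) (hp : 1 ≤ p) (hβ0 : 0 ≤ β) (hβ1 : β ≤ 1)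
    (hβp : β * p = 1 + β) (hr : 0 < r) (hα0 : 0 < α) (hα1 : α ≤ 1) (hσ : 8 * L ≤ σ)
    (hΛ : 2 * (Module.finrank ℝ E + 1) * L * σ ≤ Λ) (hρ : (Λ + 6) * r < ρ)
    (hθ : 4 * L * Λ * r ≤ σ) (hθε : C * (4 * L * Λ * r) ^ (1 - β) ≤ ε)
    (htop : 4 * C * (σ / 2) ^ (-β) + α * (C * σ ^ (1 - β)) ≤ ε)
    (hside : 2 * C * (2 * σ) ^ (1 - β) ≤ α * (3 * Λ) ^ (-1 - β) * Λ ^ 2)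
    (hM : 2 * M < α * (3 * Λ) ^ (-1 - β) * r ^ (-1 - β)) (hb : b ∈ closedBall a (2 * r))
    (hbh : b + h ∈ closedBall a (2 * r)) (hζh : ζ (b + h) = ζ b) (hpos : 0 < ζ b)
    (hζr : ζ b ≤ r) :
    w (b + h) ≤ (1 - α) * w b +
      (2 * α * (Module.finrank ℝ E + 1) * (3 * Λ) ^ (-1 - β) * σ + ε) * r ^ (1 - β) := by
  have hn : (0 : ℝ) ≤ Module.finrank ℝ E := Nat.cast_nonneg _
  have hL := F.one_le_const
  have hσ0 : 0 < σ := by linarith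
  have hΛ0 : 0 < Λ := lt_of_lt_of_le (by positivity) hΛ
  have hY : 0 < r ^ (1 - β) := Real.rpow_pos_of_pos hr _
  have : 0 < r ^ (-1 - β) := Real.rpow_pos_of_pos hr _
  have hYX : r ^ (1 - β) = r ^ (-1 - β) * r ^ 2 := rpow_one_sub_eq_rpow_mul_sq hr
  have hh : ‖h‖ ≤ 4 * r := by
    have := norm_sub_le (b + h - a) (b - a)
    rw [sub_sub_sub_cancel_right, add_sub_cancel_left] at this
    linarith [mem_closedBall_iff_norm.1 hb, mem_closedBall_iff_norm.1 hbh]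
  have hC : 0 ≤ C := S.const_nonneg (closedBall_subset_ball (by nlinarith) hb) hpos
  have hball (x) (hx : x ∈ closedBall b (Λ * r)) : x ∈ ball a ρ ∧ x + h ∈ ball a ρ := by
    have h1 : dist x a ≤ Λ * r + 2 * r := (dist_triangle x b a).trans (add_le_add hx hb)
    have h2 : dist (x + h) x ≤ 4 * r := by rwa [dist_self_add_left]
    exact ⟨mem_ball.2 (by linarith), mem_ball.2 (by linarith [dist_triangle (x + h) x a])⟩
  have key := S.translate_le_of_stripBarrier F hp hβ0 hβ1 hα0 hα1
    (N := (Module.finrank ℝ E + 1) * (3 * Λ) ^ (-1 - β) * r ^ (-1 - β))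
    (B := (3 * Λ) ^ (-1 - β) * r ^ (-1 - β)) (s := σ * r) (R := Λ * r) (θ := 4 * L * Λ * r * r)
    (ε := ε * r ^ (1 - β)) (by positivity) (by positivity) (by positivity) (by positivity) hball
    (fun x hx => ?_) ?_ (by nlinarith) ?_ ?_
    (barrier_slack_of_scaling hn hp hβp hL hσ0 hΛ hr hα0 hM) hpos (hζh ▸ hpos.le) (by nlinarith)
  · have := mul_le_mul_of_nonneg_left hζr (show 0 ≤ 2 * (α * ((Module.finrank ℝ E + 1) *
      (3 * Λ) ^ (-1 - β) * r ^ (-1 - β))) * (σ * r) by positivity)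
    linear_combination key + this -
      2 * α * (Module.finrank ℝ E + 1) * (3 * Λ) ^ (-1 - β) * σ * hYX
  · have hb' := hball b (mem_closedBall_self (by positivity))
    calc |ζ (x + h) - ζ x| ≤ L * ‖h‖ * ‖x - b‖ := by
          simpa [hζh] using F.abs_sub_sub_sub_le (hball x hx).1 hb'.1 (hball x hx).2 hb'.2
      _ ≤ L * (4 * r) * (Λ * r) := by
          gcongr
          exact mem_closedBall_iff_norm.1 hx
      _ = 4 * L * Λ * r * r := by ring
  · rw [Real.mul_rpow (by positivity) hr.le, ← mul_assoc]
    gcongr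
  · rw [mul_div_right_comm, Real.mul_rpow (by positivity) hr.le, Real.mul_rpow hσ0.le hr.le,
      rpow_neg_eq_rpow_mul hr]
    have h1 := mul_le_mul_of_nonneg_right htop hY.le
    have h2 := mul_le_mul_of_nonneg_left hh
      (show 0 ≤ C * ((σ / 2) ^ (-β) * (r ^ (-1 - β) * r)) by positivity)
    linear_combination h1 + h2 - 4 * C * (σ / 2) ^ (-β) * hYX
  · have h1 : (σ * r + 4 * L * Λ * r * r) ^ (1 - β) ≤ (2 * σ) ^ (1 - β) * r ^ (1 - β) := by
      rw [← Real.mul_rpow (by positivity) hr.le]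
      exact Real.rpow_le_rpow (by positivity) (by nlinarith) (sub_nonneg.2 hβ1)
    linear_combination 2 * C * h1 + r ^ (1 - β) * hside + α * (3 * Λ) ^ (-1 - β) * Λ ^ 2 * hYX

end LocalSolution

lemma eventually_localSolution_le_add_of_eq (F : BoundaryChart a ρ L ζ Z e)
    (C M : ℝ) (hp : 1 ≤ p) (hβ0 : 0 < β) (hβ1 : β < 1) (hβp : β * p = 1 + β) (hε : 0 < ε) :
    ∀ᶠ r in 𝓝[>] 0, ∀ w G, LocalSolution a ρ ζ p β C M w G →
      ∀ y₁ ∈ closedBall a (2 * r), ∀ y₂ ∈ closedBall a (2 * r), 0 < ζ y₁ → ζ y₁ ≤ r →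
        ζ y₂ = ζ y₁ → w y₂ ≤ w y₁ + ε * r ^ (1 - β) := by
  have hL := F.one_le_const
  obtain ⟨σ, α, Λ, hσ, hα0, hα1, hΛ, htop, hside, hsmall⟩ := exists_translation_parameters
    (Module.finrank ℝ E) C L (Nat.cast_nonneg _) hβ0 hβ1 hL (half_pos hε)
  have hσ0 : 0 < σ := by linarith
  have hΛ0 : 0 < Λ := lt_of_lt_of_le (by positivity) hΛ
  filter_upwards [self_mem_nhdsWithin,
    eventually_nhdsGT_zero_lt_of_continuous (f := fun r => (Λ + 6) * r) (by fun_prop)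
      (by simpa using F.radius_pos),
    eventually_nhdsGT_zero_lt_of_continuous (f := fun r => 4 * L * Λ * r) (c := σ) (by fun_prop)
      (by linarith),
    eventually_nhdsGT_zero_lt_of_continuous (f := fun r => C * (4 * L * Λ * r) ^ (1 - β))
      (c := ε / 2) (((by fun_prop : Continuous fun r => 4 * L * Λ * r).rpow_const
        fun _ => .inr (by linarith)).const_mul C)
      (by simpa [Real.zero_rpow (sub_pos.2 hβ1).ne'] using hε),
    eventually_nhdsGT_zero_lt_mul_rpow (2 * M)
      (show 0 < α * (3 * Λ) ^ (-1 - β) by positivity) (by linarith : -1 - β < 0)]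
    with r hr hρ hθ hθε hM w G S y₁ hy₁ y₂ hy₂ hpos hζr hζ
  have hr : 0 < r := hr
  have key := S.translate_le_of_scaling F (h := y₂ - y₁) hp hβ0.le hβ1.le hβp hr hα0 hα1 hσ hΛ hρ
    hθ.le hθε.le htop hside hM hy₁ (by simpa using hy₂) (by simpa using hζ) hpos hζr
  rw [add_sub_cancel] at key
  have hw := neg_le_of_abs_le <| S.abs_le_rpow_of_le hβ1.le
    (S.const_nonneg (closedBall_subset_ball (by nlinarith) hy₁) hpos)
    (closedBall_subset_ball (by nlinarith) hy₁) hpos.le hζr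
  have := Real.rpow_nonneg hr.le (1 - β)
  linear_combination key + α * hw + r ^ (1 - β) * hsmall

end Translation

section Hopf

variable {E : Type*} [NormedAddCommGroup E] [InnerProductSpace ℝ E] [FiniteDimensional ℝ E]
  {a e x x₀ : E} {ρ L p β A C M m k q r s κ : ℝ} {ζ : E → ℝ} {Z : E → E} {w : E → ℝ} {G : E → E}

lemma BoundaryChart.exists_hasGradLaplacianAt_hopfBarrier (F : BoundaryChart a ρ L ζ Z e)
    (hq : 0 ≤ q) (hs : 0 < s) (hqr : 4 * (q * r) ≤ 1)
    (hqs : 12 * s * (L + 2 * Module.finrank ℝ E * q) ≤ 1) (hx : x ∈ ball a ρ)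
    (hxr : x ∈ closedBall x₀ r) (hz : 0 < ζ x - q * ‖x - x₀‖ ^ 2) (hζ : ζ x ≤ s) :
    ∃ v l, HasGradLaplacianAt (fun y => (ζ y - q * ‖y - x₀‖ ^ 2) +
      1 / s * (ζ y - q * ‖y - x₀‖ ^ 2) ^ 2) v l x ∧ 1 / (4 * s) ≤ l := by
  obtain ⟨l, ⟨hlL, -⟩, hl⟩ := F.hasGradLaplacianAt x hx
  have hz_jet := hl.sub ((HasGradLaplacianAt.norm_sub_sq x₀).const_mul q)
  refine ⟨_, _, hz_jet.add (hz_jet.sq.const_mul (1 / s)), ?_⟩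
  set v := Z x - q • (2 : ℝ) • (x - x₀)
  have hv : 1 / 2 ≤ ‖v‖ := by
    have h1 := real_inner_le_norm v e
    have h2 := real_inner_le_norm (x - x₀) e
    rw [F.norm_dir, mul_one] at h1 h2
    have h3 : ⟪v, e⟫ = ⟪Z x, e⟫ - q * (2 * ⟪x - x₀, e⟫) := by
      simp only [v, inner_sub_left, real_inner_smul_left]
    have h4 := mul_le_mul_of_nonneg_left (h2.trans (mem_closedBall_iff_norm.1 hxr)) hq
    linarith [F.one_le_inner x hx]
  set z := ζ x - q * ‖x - x₀‖ ^ 2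
  set lz := l - q * (2 * Module.finrank ℝ E)
  have hzs : z / s ≤ 1 := (div_le_one hs).2 (by
    have : 0 ≤ q * ‖x - x₀‖ ^ 2 := by positivity
    linarith)
  have hlz : -1 / (12 * s) ≤ lz := by
    rw [div_le_iff₀ (by positivity)]
    nlinarith
  have hmain : (1 + 2 * (z / s)) * (-1 / (12 * s)) ≤ (1 + 2 * (z / s)) * lz := by gcongr
  have hsmall : 2 * (1 - z / s) * (-1 / (12 * s)) ≤ 0 :=
    mul_nonpos_of_nonneg_of_nonpos (by linarith) (div_nonpos_of_nonpos_of_nonneg (by norm_num)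
      (by positivity))
  have hgrad : 1 / s * (2 * (1 / 2) ^ 2) ≤ 1 / s * (2 * ‖v‖ ^ 2) := by gcongr
  linear_combination hmain + hsmall + hgrad

lemma LocalSolution.mul_le_add_of_le_on_level (F : BoundaryChart a ρ L ζ Z e)
    (S : LocalSolution a ρ ζ p β C M w G) (hA : 0 ≤ A) (hk : 0 ≤ k) (hq : 0 ≤ q) (hs : 0 < s)
    (hqr : 4 * (q * r) ≤ 1) (hqrs : q * r ^ 2 = s)
    (hqs : 12 * s * (L + 2 * Module.finrank ℝ E * q) ≤ 1) (hM : M < k * (1 / (4 * s)))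
    (hball : closedBall x₀ r ⊆ ball a ρ)
    (hlow : ∀ x ∈ closedBall x₀ r, 0 ≤ ζ x → 0 ≤ w x + A * ζ x)
    (hlev : ∀ x ∈ closedBall x₀ r, ζ x = s → 2 * k * s ≤ w x)
    (hx : x ∈ closedBall x₀ r) (hζ : ζ x ≤ s) (hz : 0 ≤ ζ x - q * ‖x - x₀‖ ^ 2) :
    k * (ζ x - q * ‖x - x₀‖ ^ 2) ≤ w x + A * ζ x := by
  set z : E → ℝ := fun y => ζ y - q * ‖y - x₀‖ ^ 2
  have hzζ (y) : z y ≤ ζ y := sub_le_self _ (by positivity)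
  have hcζ : ContinuousOn ζ (closedBall x₀ r) := F.continuousOn.mono hball
  have hcz : ContinuousOn z (closedBall x₀ r) := hcζ.sub (by fun_prop)
  have hcw : ContinuousOn w (closedBall x₀ r ∩ {y | 0 ≤ min (z y) (s - ζ y)}) :=
    S.continuousOn.mono fun y hy => ⟨hball hy.1, (le_min_iff.1 hy.2).1.trans (hzζ y)⟩
  have hle_of_zero (y) (hy : y ∈ closedBall x₀ r) (hzy : z y = 0) :
      k * (z y + 1 / s * z y ^ 2) ≤ w y + A * ζ y := by
    simpa [hzy] using hlow y hy (hzy ▸ hzζ y)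
  have hle_of_level (y) (hy : y ∈ closedBall x₀ r) (hzy : 0 ≤ z y) (hζy : ζ y = s) :
      k * (z y + 1 / s * z y ^ 2) ≤ w y + A * ζ y := by
    have hzs : z y ≤ s := hζy ▸ hzζ y
    calc k * (z y + 1 / s * z y ^ 2) ≤ k * (s + 1 / s * s ^ 2) := by gcongr
      _ = 2 * k * s := by field_simp; ring
      _ ≤ w y + A * ζ y := by linarith [hlev y hy hζy, show 0 ≤ A * ζ y by rw [hζy]; positivity]
  have key := le_of_hasGradLaplacianAt (b := x₀) (R := r) (φ := fun y => min (z y) (s - ζ y))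
    (v := fun y => k * (z y + 1 / s * z y ^ 2)) (B := fun y => w y + A * ζ y)
    (hcz.inf (continuousOn_const.sub hcζ))
    (((hcz.add ((hcz.pow 2).const_mul _)).const_mul k).mono inter_subset_left)
    (hcw.add ((hcζ.mono inter_subset_left).const_mul A)) (fun y hy h0 => ?_) (fun y hy h0 => ?_)
    (fun y hy h0 => ?_) x hx (le_min hz (sub_nonneg.2 hζ))
  · have : 0 ≤ k * (1 / s * z x ^ 2) := by positivity
    linarith
  · obtain ⟨hzy, hζy⟩ := le_min_iff.1 h0
    refine hle_of_level y (sphere_subset_closedBall hy) hzy (le_antisymm (sub_nonneg.1 hζy) ?_)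
    have : z y = ζ y - s := by rw [← hqrs, ← mem_sphere_iff_norm.1 hy]
    linarith
  · rcases min_choice (z y) (s - ζ y) with h | h
    · exact hle_of_zero y hy (h ▸ h0)
    · exact hle_of_level y hy (h0 ▸ min_le_left _ _) (sub_eq_zero.1 (h ▸ h0)).symm
  · obtain ⟨hzy, hζy⟩ := lt_min_iff.1 h0
    have hyr := ball_subset_closedBall hy
    obtain ⟨v, l, hv, hl⟩ := F.exists_hasGradLaplacianAt_hopfBarrier hq hs hqr hqs (hball hyr) hyr
      hzy (sub_pos.1 hζy).le
    obtain ⟨lw, hw, hlw⟩ := S.hasGradLaplacianAt y (hball hyr) (hzy.trans_le (hzζ y))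
    obtain ⟨lζ, ⟨-, hlζ⟩, hjζ⟩ := F.hasGradLaplacianAt y (hball hyr)
    refine ⟨_, _, _, _, hv.const_mul k, hw.add (hjζ.const_mul A), fun _ => ?_⟩
    have h1 : 0 ≤ ‖G y‖ ^ p := by positivity
    have h2 := mul_le_mul_of_nonneg_left hl hk
    have h3 := mul_le_mul_of_nonneg_left hlζ hA
    linarith [(abs_le.1 hlw).2]

lemma LocalSolution.mul_sub_le_add_of_scaling (F : BoundaryChart a ρ L ζ Z e)
    (S : LocalSolution a ρ ζ p β C M w G) (hA : 0 ≤ A) (hm : 0 ≤ m) (hκ : 0 < κ) (hr : 0 < r)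
    (hκ1 : 4 * κ ≤ 1) (hκr : 12 * κ * L * r + 24 * Module.finrank ℝ E * κ ^ 2 ≤ 1)
    (hM : M < m * κ ^ (-1 - β) / 8 * r ^ (-1 - β)) (hball : closedBall x₀ r ⊆ ball a ρ)
    (hlow : ∀ x ∈ closedBall x₀ r, 0 ≤ ζ x → 0 ≤ w x + A * ζ x)
    (hlev : ∀ x ∈ closedBall x₀ r, ζ x = κ * r → m * (κ * r) ^ (1 - β) ≤ w x)
    (hx : x ∈ closedBall x₀ r) (hζ0 : 0 ≤ ζ x) (hζ : ζ x ≤ κ * r) :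
    m * (κ * r) ^ (-β) / 2 * (ζ x - κ / r * ‖x - x₀‖ ^ 2) ≤ w x + A * ζ x := by
  have hs : 0 < κ * r := by positivity
  have hsβ : (κ * r) ^ (-β) = (κ * r) ^ (-1 - β) * (κ * r) := rpow_neg_eq_rpow_mul hs
  rcases le_total (ζ x - κ / r * ‖x - x₀‖ ^ 2) 0 with hz | hz
  · exact (mul_nonpos_of_nonneg_of_nonpos (by positivity) hz).trans (hlow x hx hζ0)
  · refine S.mul_le_add_of_le_on_level F hA (by positivity) (by positivity) hs ?_ (by field_simp) ?_
      ?_ hball hlow (fun y hy hys => ?_) hx hζ hz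
    · rwa [div_mul_cancel₀ _ hr.ne']
    · refine le_of_eq_of_le ?_ hκr
      field_simp
      ring
    · refine hM.trans_eq ?_
      rw [hsβ, Real.mul_rpow hκ.le hr.le]
      field_simp
      ring
    · refine le_of_eq_of_le ?_ (hlev y hy hys)
      rw [hsβ, rpow_one_sub_eq_rpow_mul_sq hs]
      ring

lemma eventually_localSolution_quadratic_le (F : BoundaryChart a ρ L ζ Z e) (hβ0 : 0 < β)
    (hβ1 : β ≤ 1) (hC : 0 ≤ C) (hM : 0 ≤ M) (hm : 0 < m) (K : ℝ) :
    ∀ᶠ κ in 𝓝[>] 0, ∀ᶠ r in 𝓝[>] 0, ∃ q, ∀ w G, LocalSolution a ρ ζ p β C M w G →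
      (∀ y ∈ closedBall a (2 * r), ζ y = κ * r → m * (κ * r) ^ (1 - β) ≤ w y) →
      ∀ x₀, ‖x₀ - a‖ = r → ζ x₀ = 0 →
        ∀ᶠ x in 𝓝 x₀, 0 < ζ x → K * r ^ (-β) * ζ x - q * ‖x - x₀‖ ^ 2 ≤ w x := by
  obtain ⟨A, hA, hlow⟩ := LocalSolution.exists_neg_mul_le F p hβ1 hC hM
  set n : ℝ := (Module.finrank ℝ E : ℝ)
  have hρL : 0 < ρ / (4 * L) := by have := F.const_pos; have := F.radius_pos; positivity
  filter_upwards [self_mem_nhdsWithin,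
    eventually_nhdsGT_zero_lt_mul_rpow (K + 1) (half_pos hm) (neg_neg_of_pos hβ0),
    eventually_nhdsGT_zero_lt_of_continuous (f := fun κ => 4 * κ) (c := 1) (by fun_prop) (by simp),
    eventually_nhdsGT_zero_lt_of_continuous (f := fun κ => 24 * n * κ ^ 2) (c := 1)
      (by fun_prop) (by simp)] with κ hκ hκK hκ1 hκn
  have hκ : 0 < κ := hκ
  filter_upwards [self_mem_nhdsWithin,
    eventually_nhdsGT_zero_lt_of_continuous (f := fun r => 12 * κ * L * r) (c := 1 - 24 * n * κ ^ 2)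
      (by fun_prop) (by simpa using hκn),
    eventually_nhdsGT_zero_lt_of_continuous (f := fun r => 2 * r) (by fun_prop)
      (by simpa using hρL),
    eventually_nhdsGT_zero_lt_mul_rpow A one_pos (neg_neg_of_pos hβ0),
    eventually_nhdsGT_zero_lt_mul_rpow M (show 0 < m * κ ^ (-1 - β) / 8 by positivity)
      (by linarith : -1 - β < 0)] with r hr hrL hrρ hrA hrM
  have hr : 0 < r := hr
  have hs : 0 < κ * r := mul_pos hκ hr
  have hk : K * r ^ (-β) + A ≤ m * (κ * r) ^ (-β) / 2 := by
    have := mul_le_mul_of_nonneg_right hκK.le (Real.rpow_nonneg hr.le (-β))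
    rw [Real.mul_rpow hκ.le hr.le]
    linarith
  refine ⟨m * (κ * r) ^ (-β) / 2 * (κ / r), fun w G S hlev x₀ hx₀ hζ₀ => ?_⟩
  have hsub : closedBall x₀ r ⊆ closedBall a (2 * r) :=
    closedBall_subset_closedBall' (by rw [dist_eq_norm, hx₀, two_mul])
  have hfoot (y) (hy : y ∈ closedBall x₀ r) : ‖y - a‖ < ρ / (4 * L) :=
    (mem_closedBall_iff_norm.1 (hsub hy)).trans_lt hrρ
  have hball : closedBall x₀ r ⊆ ball a ρ := fun y hy =>
    mem_ball_iff_norm.2 (by linarith [hfoot y hy, F.div_four_mul_le, F.radius_pos])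
  have hlow₀ (y) (hy : y ∈ closedBall x₀ r) (h0 : 0 ≤ ζ y) : 0 ≤ w y + A * ζ y := by
    rcases h0.eq_or_lt with h0 | h0
    · simp [← h0, S.eq_zero y (hball hy) h0.symm]
    · linarith [hlow w G S y (hfoot y hy) h0]
  have hζx₀ := (F.hasGradientAt (hball (mem_closedBall_self hr.le))).continuousAt
  filter_upwards [closedBall_mem_nhds x₀ hr, hζx₀.eventually_lt_const (hζ₀ ▸ hs)] with x hx hxs hpos
  have key := S.mul_sub_le_add_of_scaling F hA hm.le hκ hr hκ1.le (by linarith) hrM hball hlow₀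
    (fun y hy => hlev y (hsub hy)) hx hpos.le hxs.le
  have := mul_le_mul_of_nonneg_right hk hpos.le
  linarith

end Hopf

section Evolution

variable {E : Type*} [NormedAddCommGroup E] [InnerProductSpace ℝ E] [FiniteDimensional ℝ E]
  {a e x g v : E} {ρ L p β C C₀ M c q t₀ T : ℝ} {ζ w : E → ℝ} {Z G : E → E} {Ω : Set E}

lemma BoundaryChart.rpow_neg_infDist_add_one_le (F : BoundaryChart a ρ L ζ Z e)
    (hΩ : IsDefiningFunctionOn ζ Ω (ball a ρ)) (hβ0 : 0 ≤ β) (hx : x ∈ ball a (ρ / 2))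
    (hpos : 0 < ζ x) :
    infDist x (frontier Ω) ^ (-β) + 1 ≤ (L ^ β + 1) * ζ x ^ (-β) := by
  have hL := F.const_pos
  have hxρ : x ∈ ball a ρ := ball_subset_ball (by linarith [F.radius_pos]) hx
  have hdist : infDist x (frontier Ω) ^ (-β) ≤ L ^ β * ζ x ^ (-β) := by
    have := Real.rpow_le_rpow_of_nonpos (by positivity)
      ((div_le_iff₀' hL).2 (F.le_mul_infDist hΩ hx)) (neg_nonpos.2 hβ0)
    rwa [Real.div_rpow hpos.le hL.le, Real.rpow_neg hL.le, div_inv_eq_mul, mul_comm] at this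
  have hone : 1 ≤ ζ x ^ (-β) :=
    Real.one_le_rpow_of_pos_of_le_one_of_nonpos hpos (F.le_one x hxρ) (neg_nonpos.2 hβ0)
  linarith

lemma BoundaryChart.localSolution (F : BoundaryChart a ρ L ζ Z e)
    (hΩ : IsDefiningFunctionOn ζ Ω (ball a ρ)) (hβ0 : 0 ≤ β) (hβ1 : β < 1)
    (hw : ContinuousOn w (closure Ω)) (hw0 : ∀ x ∈ frontier Ω, w x = 0)
    (hsol : ∀ x ∈ Ω, ∃ l, HasGradLaplacianAt w (G x) l x ∧ |l + ‖G x‖ ^ p| ≤ M)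
    (hG : ∀ x ∈ Ω, ‖G x‖ ≤ C₀ * (infDist x (frontier Ω) ^ (-β) + 1)) :
    LocalSolution a (ρ / 2 / (4 * L)) ζ p β (|C₀| * (L ^ β + 1) / (1 - β)) M w G := by
  have hρ := F.radius_pos
  have hL := F.const_pos
  have F' := F.mono (half_pos hρ) (half_le_self hρ.le)
  have hhalf : ball a (ρ / 2) ⊆ ball a ρ := ball_subset_ball (half_le_self hρ.le)
  have hsmall : ball a (ρ / 2 / (4 * L)) ⊆ ball a (ρ / 2) :=
    fun x hx => F'.mem_ball_of_norm_sub_lt (mem_ball_iff_norm.1 hx)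
  have hin (x : E) (hx : x ∈ ball a (ρ / 2)) (hpos : 0 < ζ x) : x ∈ Ω :=
    (hΩ x (hhalf hx)).1.2 hpos
  have hbd (x : E) (hx : x ∈ ball a (ρ / 2)) (h0 : ζ x = 0) : x ∈ frontier Ω :=
    (hΩ x (hhalf hx)).2.2 h0
  have hcont : ContinuousOn w {x ∈ ball a (ρ / 2) | 0 ≤ ζ x} := hw.mono fun x hx =>
    hx.2.eq_or_lt.elim (fun h => frontier_subset_closure (hbd x hx.1 h.symm))
      fun h => subset_closure (hin x hx.1 h)
  have hgrad (x : E) (hx : x ∈ ball a (ρ / 2)) (hpos : 0 < ζ x) :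
      ‖G x‖ ≤ |C₀| * (L ^ β + 1) * ζ x ^ (-β) := by
    have hd : 0 ≤ infDist x (frontier Ω) ^ (-β) + 1 :=
      add_nonneg (Real.rpow_nonneg infDist_nonneg _) zero_le_one
    calc ‖G x‖ ≤ C₀ * (infDist x (frontier Ω) ^ (-β) + 1) := hG x (hin x hx hpos)
      _ ≤ |C₀| * (infDist x (frontier Ω) ^ (-β) + 1) := by gcongr; exact le_abs_self C₀
      _ ≤ |C₀| * ((L ^ β + 1) * ζ x ^ (-β)) := by
        gcongr; exact F.rpow_neg_infDist_add_one_le hΩ hβ0 hx hpos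
      _ = |C₀| * (L ^ β + 1) * ζ x ^ (-β) := by ring
  refine ⟨hcont.mono fun x hx => ⟨hsmall hx.1, hx.2⟩,
    fun x hx h0 => hw0 x (hbd x (hsmall hx) h0), fun x hx hpos => hsol x (hin x (hsmall hx) hpos),
    fun x hx hpos => (hgrad x (hsmall hx) hpos).trans ?_, fun x hx hnonneg => ?_⟩
  · gcongr
    exact le_div_self (by positivity) (sub_pos.2 hβ1) (sub_le_self 1 hβ0)
  · refine F'.abs_le_rpow_of_norm_gradient_le (G := G) hβ0 hβ1 hcont
      (fun y hy h0 => hw0 y (hbd y hy h0)) (fun y hy hpos => ?_) (mem_ball_iff_norm.1 hx) hnonneg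
    obtain ⟨l, hl, -⟩ := hsol y (hin y hy hpos)
    exact ⟨hl.hasGradientAt, hgrad y hy hpos⟩

/- If `w` is below the threshold `m` at one point of the level `{ζ = κ * r}`, then `w'` is below
`3 * m` on the whole level; otherwise `w` is above the threshold on the whole level. -/
lemma eventually_norm_gradient_le_or_quadratic_le (F : BoundaryChart a ρ L ζ Z e) (hp : 1 ≤ p)
    (hβ0 : 0 < β) (hβ1 : β < 1) (hβp : β * p = 1 + β) (hC : 0 ≤ C) (hM : 0 ≤ M) (K : ℝ) :
    ∀ᶠ r in 𝓝[>] 0, ∃ m > 0, ∃ q B, ∃ η > 0, ∀ w G, LocalSolution a ρ ζ p β C M w G →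
      (∀ w' G', LocalSolution a ρ ζ p β C M w' G' →
        (∀ y ∈ ball a ρ, 0 < ζ y → w' y ≤ w y + m) → ∀ x ∈ ball a η, 0 < ζ x → ‖G' x‖ ≤ B) ∨
      ∀ x₀, ‖x₀ - a‖ = r → ζ x₀ = 0 →
        ∀ᶠ x in 𝓝 x₀, 0 < ζ x → K * r ^ (-β) * ζ x - q * ‖x - x₀‖ ^ 2 ≤ w x := by
  obtain ⟨m, hm, hsmall⟩ :=
    LocalSolution.exists_forall_eventually_norm_gradient_le F hp hβ0.le hβ1.le hβp hC hM
  obtain ⟨κ, hgrad, hquad, hκ0, hκ1⟩ := (hsmall.and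
    ((eventually_localSolution_quadratic_le (p := p) F hβ0 hβ1.le hC hM hm K).and
      (Ioo_mem_nhdsGT one_pos))).exists
  filter_upwards [hgrad, hquad, Ioo_mem_nhdsGT F.radius_pos,
    eventually_localSolution_le_add_of_eq F C M hp hβ0 hβ1 hβp
      (by positivity : 0 < m * κ ^ (1 - β))]
    with r ⟨B, η, hη, hB⟩ ⟨q, hq⟩ ⟨hr, hrρ⟩ hlevel
  have hs : 0 < κ * r := mul_pos hκ0 hr
  rw [mul_assoc, ← Real.mul_rpow hκ0.le hr.le] at hlevel
  set m' := m * (κ * r) ^ (1 - β) with hm'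
  refine ⟨m', by positivity, q, B, η, hη, fun w G S => ?_⟩
  by_cases! hlow : ∃ y₁ ∈ closedBall a (2 * r), ζ y₁ = κ * r ∧ w y₁ < m'
  · obtain ⟨y₁, hy₁, hζ₁, hlt⟩ := hlow
    refine .inl fun w' G' S' hww' => hB w' G' S' fun y hy hζ => ?_
    have hy' : y ∈ closedBall a (2 * r) :=
      ball_subset_closedBall (ball_subset_ball (by linarith) hy)
    have h1 := hlevel w G S y₁ hy₁ y hy' (hζ₁ ▸ hs)
      (hζ₁.trans_le (mul_le_of_le_one_left hr.le hκ1.le)) (hζ.trans hζ₁.symm)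
    have h2 := hww' y (ball_subset_ball hrρ.le hy) (hζ ▸ hs)
    rw [mul_assoc, ← hm']
    linarith
  · exact .inr (hq w G S hlow)

lemma eventually_quadratic_le_of_forall_exists_le_norm {u : E → ℝ → ℝ} {G : E → ℝ → E}
    (F : BoundaryChart a ρ L ζ Z e) (hΩ : IsDefiningFunctionOn ζ Ω (ball a ρ)) (hp : 1 ≤ p)
    (hβ0 : 0 < β) (hβ1 : β < 1) (hβp : β * p = 1 + β) (hC : 0 ≤ C) (hM : 0 ≤ M) (hT : t₀ < T)
    (hS : ∀ t ∈ Ioo t₀ T, LocalSolution a ρ ζ p β C M (u · t) (G · t))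
    (hu : ∀ y ∈ Ω, ∀ t ∈ Ioo t₀ T, ∀ t' ∈ Ioo t₀ T, u y t' ≤ u y t + M * |t' - t|)
    (hGBU : ∀ B, ∀ η > 0, ∃ x ∈ Ω, ∃ t ∈ Ioo (T - η) T, dist x a < η ∧ B ≤ ‖G x t‖) (K : ℝ) :
    ∀ᶠ r in 𝓝[>] 0, ∃ q, ∀ᶠ t in 𝓝[<] T, ∀ x₀, ‖x₀ - a‖ = r → ζ x₀ = 0 →
      ∀ᶠ x in 𝓝 x₀, 0 < ζ x → K * r ^ (-β) * ζ x - q * ‖x - x₀‖ ^ 2 ≤ u x t := by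
  filter_upwards [eventually_norm_gradient_le_or_quadratic_le F hp hβ0 hβ1 hβp hC hM K]
    with r ⟨m, hm, q, B, η, hη, hdichotomy⟩
  refine ⟨q, ?_⟩
  obtain ⟨τ, hMτ, hτ⟩ : ∃ τ, M * τ < m ∧ τ ∈ Ioo 0 (T - t₀) :=
    ((eventually_nhdsGT_zero_lt_of_continuous (f := fun τ => M * τ) (by fun_prop)
      (by simpa using hm)).and (Ioo_mem_nhdsGT (sub_pos.2 hT))).exists
  have hlate : Ioo (T - τ) T ⊆ Ioo t₀ T := Ioo_subset_Ioo_left (by linarith [hτ.2])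
  filter_upwards [Ioo_mem_nhdsLT (sub_lt_self T hτ.1)] with t ht
  refine (hdichotomy _ _ (hS t (hlate ht))).resolve_left fun hbound => ?_
  obtain ⟨y, hyΩ, t', ht', hya, hlarge⟩ :=
    hGBU (B + 1) (min (min η ρ) τ) (lt_min (lt_min hη F.radius_pos) hτ.1)
  obtain ⟨⟨hyη, hyρ⟩, -⟩ := (lt_min_iff.trans (and_congr_left' lt_min_iff)).1 hya
  replace ht' : t' ∈ Ioo (T - τ) T :=
    Ioo_subset_Ioo_left (sub_le_sub_left (min_le_right _ _) T) ht'
  refine ((lt_add_one B).trans_le hlarge).not_ge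
    (hbound _ _ (hS t' (hlate ht')) (fun z hz hζz => ?_) y hyη ((hΩ y hyρ).1.1 hyΩ))
  have htt' : |t' - t| ≤ τ := abs_le.2 ⟨by linarith [ht.2, ht'.1], by linarith [ht.1, ht'.2]⟩
  calc u z t' ≤ u z t + M * |t' - t| := hu z ((hΩ z hz).1.2 hζz) t (hlate ht) t' (hlate ht')
    _ ≤ u z t + M * τ := by gcongr
    _ ≤ u z t + m := by gcongr

lemma BoundaryChart.le_inner_of_quadratic_le (F : BoundaryChart a ρ L ζ Z e)
    (hΩ : IsDefiningFunctionOn ζ Ω (ball a ρ)) (hxa : ‖x - a‖ < ρ / (4 * L)) (hv : ‖v‖ = 1)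
    (hdist : ∀ᶠ τ : ℝ in 𝓝[>] 0, x + τ • v ∈ Ω ∧ infDist (x + τ • v) (frontier Ω) = τ)
    (hg : HasGradientWithinAt w g (closure Ω) x) (hwx : w x = 0) (hc : 0 ≤ c)
    (h : ∀ᶠ y in 𝓝 x, 0 < ζ y → c * ζ y - q * ‖y - x‖ ^ 2 ≤ w y) : c ≤ ⟪g, v⟫ := by
  have hline : HasDerivAt (fun τ : ℝ => x + τ • v) v 0 := by
    simpa using ((hasDerivAt_id (0 : ℝ)).smul_const v).const_add x
  have htendsto : Tendsto (fun τ : ℝ => x + τ • v) (𝓝[>] 0) (𝓝 x) := by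
    simpa using hline.continuousAt.tendsto.mono_left nhdsWithin_le_nhds
  obtain ⟨s, hs, hsub⟩ := mem_nhdsGT_iff_exists_Ioo_subset.1 hdist
  have hderiv : HasDerivWithinAt (fun τ : ℝ => w (x + τ • v)) ⟪g, v⟫ (Ioi 0) 0 := by
    have hg' : HasFDerivWithinAt w (innerSL ℝ g) (closure Ω) (x + (0 : ℝ) • v) := by
      rw [zero_smul, add_zero]
      exact hg.hasFDerivWithinAt
    simpa [Function.comp_def] using (hg'.comp_hasDerivWithinAt (0 : ℝ)
      (hline.hasDerivWithinAt (s := Ioo 0 s)) fun τ hτ => subset_closure (hsub hτ).1)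
        |>.mono_of_mem_nhdsWithin (Ioo_mem_nhdsGT hs)
  refine le_of_hasDerivWithinAt_of_quadratic_le (c := c) (q := q) hderiv (by simpa using hwx) ?_
  filter_upwards [hdist, htendsto.eventually h, self_mem_nhdsWithin,
    htendsto.eventually ((continuous_id.sub continuous_const).norm.continuousAt.eventually_lt_const
      hxa)] with τ ⟨hmem, hτ⟩ hquad (hτ0 : 0 < τ) hnear
  have hpos : 0 < ζ (x + τ • v) := (hΩ _ (F.mem_ball_of_norm_sub_lt hnear)).1.1 hmem
  have hle : τ ≤ ζ (x + τ • v) := hτ.symm.trans_le (F.infDist_le hΩ hnear hpos)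
  have hnorm : ‖x + τ • v - x‖ = τ := by
    rw [add_sub_cancel_left, norm_smul, hv, mul_one, Real.norm_of_nonneg hτ0.le]
  calc c * τ - q * τ ^ 2 ≤ c * ζ (x + τ • v) - q * τ ^ 2 := by gcongr
    _ ≤ w (x + τ • v) := by simpa only [hnorm] using hquad hpos

lemma hasGradLaplacianAt_trace {H : E → E →L[ℝ] E} (hΩ : IsOpen Ω) (hx : x ∈ Ω)
    (hG : ∀ x ∈ closure Ω, HasGradientWithinAt w (G x) (closure Ω) x)
    (hH : HasFDerivAt G (H x) x) : HasGradLaplacianAt w (G x) (LinearMap.trace ℝ E (H x)) x := by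
  refine ⟨G, H x, ?_, hH, rfl, rfl⟩
  filter_upwards [hΩ.mem_nhds hx] with y hy
  exact hasGradientAt_iff_hasFDerivAt.2 <|
    (hG y (subset_closure hy)).hasFDerivWithinAt.hasFDerivAt
      (mem_of_superset (hΩ.mem_nhds hy) subset_closure)

lemma le_add_mul_abs_sub_of_abs_deriv_le {f f' : ℝ → ℝ} {s : Set ℝ} {t t' : ℝ} (hs : Convex ℝ s)
    (hf : ∀ t ∈ s, HasDerivAt f (f' t) t) (hM : ∀ t ∈ s, |f' t| ≤ M) (ht : t ∈ s) (ht' : t' ∈ s) :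
    f t' ≤ f t + M * |t' - t| := by
  have := hs.norm_image_sub_le_of_norm_hasDerivWithin_le
    (fun t ht => (hf t ht).hasDerivWithinAt) hM ht ht'
  rw [Real.norm_eq_abs, Real.norm_eq_abs] at this
  linarith [le_abs_self (f t' - f t)]

end Evolution

lemma trace_eq_sum_inner_single {n : ℕ}
    (A : EuclideanSpace ℝ (Fin n) →L[ℝ] EuclideanSpace ℝ (Fin n)) :
    LinearMap.trace ℝ _ (A : EuclideanSpace ℝ (Fin n) →ₗ[ℝ] _) =
      ∑ i : Fin n, ⟪A (EuclideanSpace.single i (1 : ℝ)), EuclideanSpace.single i (1 : ℝ)⟫ := by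
  simp only [LinearMap.trace_eq_sum_inner _ (EuclideanSpace.basisFun (Fin n) ℝ),
    EuclideanSpace.basisFun_apply, real_inner_comm, ContinuousLinearMap.coe_coe]

theorem stmt8_general {E : Type*} [NormedAddCommGroup E] [InnerProductSpace ℝ E]
    [FiniteDimensional ℝ E] {p β : ℝ} (hp : 2 < p) (hβ : β = 1 / (p - 1)) {Ω : Set E}
    (hΩ : IsOpen Ω) {a : E} (ha : a ∈ frontier Ω) (hΩa : HasC2DefiningFunctionAt Ω a)
    {δ₀ : ℝ} (hδ₀ : 0 < δ₀) {ν : E → E}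
    (hν : ∀ b ∈ frontier Ω, ‖ν b‖ = 1 ∧
      ∀ s ∈ Ioo (0 : ℝ) δ₀, b + s • ν b ∈ Ω ∧ infDist (b + s • ν b) (frontier Ω) = s)
    {t₀ T : ℝ} (hT : t₀ < T) {u u' : E → ℝ → ℝ} {G : E → ℝ → E} {H : E → ℝ → E →L[ℝ] E}
    (hu0 : ∀ b ∈ frontier Ω, ∀ t ∈ Ioo t₀ T, u b t = 0)
    (hG : ∀ t ∈ Ioo t₀ T, ∀ x ∈ closure Ω,
      HasGradientWithinAt (fun y => u y t) (G x t) (closure Ω) x)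
    (hH : ∀ t ∈ Ioo t₀ T, ∀ x ∈ Ω, HasFDerivAt (fun y => G y t) (H x t) x)
    (hu' : ∀ t ∈ Ioo t₀ T, ∀ x ∈ Ω, HasDerivAt (fun s => u x s) (u' x t) t)
    (hPDE : ∀ t ∈ Ioo t₀ T, ∀ x ∈ Ω, u' x t - LinearMap.trace ℝ E (H x t) = ‖G x t‖ ^ p)
    {M : ℝ} (hM : ∀ x ∈ Ω, ∀ t ∈ Ioo t₀ T, |u' x t| ≤ M)
    {C₀ : ℝ} (hC₀ : ∀ x ∈ Ω, ∀ t ∈ Ioo t₀ T, ‖G x t‖ ≤ C₀ * (infDist x (frontier Ω) ^ (-β) + 1))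
    (hGBU : ∀ K, ∀ η > 0, ∃ x ∈ Ω, ∃ t ∈ Ioo (T - η) T, dist x a < η ∧ K ≤ ‖G x t‖) :
    ∀ K > 0, ∃ η > 0, ∀ x ∈ frontier Ω, x ≠ a → dist x a < η →
      ((K * dist x a ^ (-β) : ℝ) : EReal) ≤
        liminf (fun t => ((⟪G x t, ν x⟫ : ℝ) : EReal)) (𝓝[<] T) := by
  intro K hK
  obtain ⟨hβ0, hβ1, hβp⟩ := exponent_bounds hp hβ
  have hM0 : 0 ≤ M := by
    obtain ⟨y, hy, -⟩ := hGBU 0 1 one_pos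
    obtain ⟨t, ht⟩ := nonempty_Ioo.2 hT
    exact (abs_nonneg _).trans (hM y hy t ht)
  obtain ⟨ρ, L, ζ, Z, e, F, hζ⟩ := exists_boundaryChart ha hΩa
  have hρ := F.radius_pos
  have hL := F.const_pos
  have hS (t : ℝ) (ht : t ∈ Ioo t₀ T) := F.localSolution (p := p) (M := M) hζ hβ0.le hβ1
    (fun x hx => (hG t ht x hx).continuousWithinAt) (hu0 · · t ht)
    (fun x hx => ⟨_, hasGradLaplacianAt_trace (H := (H · t)) hΩ hx (hG t ht) (hH t ht x hx),
      by simpa only [← hPDE t ht x hx, add_sub_cancel] using hM x hx t ht⟩) (hC₀ · · t ht)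
  have hρ' : 0 < ρ / 2 / (4 * L) := by positivity
  have hρ'L : ρ / 2 / (4 * L) ≤ ρ / (4 * L) := by gcongr; exact half_le_self hρ.le
  set ρ' := ρ / 2 / (4 * L)
  have hρ'ρ : ρ' ≤ ρ := by linarith [F.div_four_mul_le]
  have hquad := eventually_quadratic_le_of_forall_exists_le_norm (F.mono hρ' hρ'ρ)
    (fun x hx => hζ x (ball_subset_ball hρ'ρ hx)) (by linarith) hβ0 hβ1 hβp
    (div_nonneg (by positivity) (sub_pos.2 hβ1).le) hM0 hT hS
    (fun y hy t ht t' ht' => le_add_mul_abs_sub_of_abs_deriv_le (convex_Ioo t₀ T)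
      (hu' · · y hy) (hM y hy) ht ht') hGBU K
  obtain ⟨η, hη, hsub⟩ := mem_nhdsGT_iff_exists_Ioo_subset.1 hquad
  refine ⟨min η ρ', lt_min hη hρ', fun x hx hxa hdist => ?_⟩
  rw [dist_eq_norm] at hdist ⊢
  have hxη := hdist.trans_le (min_le_left _ _)
  have hxρ := (hdist.trans_le (min_le_right _ _)).trans_le hρ'L
  obtain ⟨q, hq⟩ := hsub ⟨norm_pos_iff.2 (sub_ne_zero.2 hxa), hxη⟩
  refine le_liminf_of_le (by isBoundedDefault) ?_
  filter_upwards [hq, Ioo_mem_nhdsLT hT] with t hqt ht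
  refine EReal.coe_le_coe_iff.2 (F.le_inner_of_quadratic_le hζ hxρ (hν x hx).1 ?_
    (hG t ht x (frontier_subset_closure hx)) (hu0 x hx t ht) (by positivity)
    (hqt x rfl ((hζ x (F.mem_ball_of_norm_sub_lt hxρ)).2.1 hx)))
  filter_upwards [Ioo_mem_nhdsGT hδ₀] with τ hτ using (hν x hx).2 τ hτ

theorem stmt8 {n : ℕ} (hn : 1 ≤ n)
    -- the exponents and constants
    (p β cp dp : ℝ) (hp : 2 < p) (hβ : β = 1 / (p - 1))
    (hcp : cp = β ^ β / (1 - β)) (hdp : dp = β ^ β)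
    -- the bounded domain Ω with C² boundary
    (Ω : Set (EuclideanSpace ℝ (Fin n))) (hΩo : IsOpen Ω) (hΩb : Bornology.IsBounded Ω) (hΩc2 : IsC2Boundary Ω)
    -- the distance to the boundary
    (δ : EuclideanSpace ℝ (Fin n) → ℝ) (hδ : ∀ x, δ x = infDist x (frontier Ω))
    -- δ₀ and the boundary neighborhood Ωδ = {x ∈ Ω : δ(x) < δ₀}
    (δ₀ : ℝ) (hδ₀ : 0 < δ₀)
    (Ωδ : Set (EuclideanSpace ℝ (Fin n))) (hΩδ : Ωδ = {x ∈ Ω | δ x < δ₀})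
    -- δ is C² on Ωδ
    (hδC2 : ContDiffOn ℝ 2 δ Ωδ)
    -- every x ∈ Ωδ has a unique nearest boundary point P x
    (P : EuclideanSpace ℝ (Fin n) → EuclideanSpace ℝ (Fin n))
    (hP : ∀ x ∈ Ωδ, P x ∈ frontier Ω ∧ dist x (P x) = δ x ∧
      ∀ b ∈ frontier Ω, dist x b = δ x → b = P x)
    -- interior sphere condition of radius δ₀ at every boundary point
    (hsph : ∀ b ∈ frontier Ω, ∃ y, ball y δ₀ ⊆ Ω ∧ dist y b = δ₀)
    -- the inward unit normal field ν
    (ν : EuclideanSpace ℝ (Fin n) → EuclideanSpace ℝ (Fin n))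
    (hν1 : ∀ b ∈ frontier Ω, ‖ν b‖ = 1 ∧
      ∀ s ∈ Ioo (0 : ℝ) δ₀, b + s • ν b ∈ Ω ∧ δ (b + s • ν b) = s)
    (hν2 : ∀ x ∈ Ωδ, ν x = ν (P x) ∧ HasGradientAt δ (ν x) x)
    -- the solution u on [0,T], with spatial gradient G, spatial Hessian H and
    -- time derivative u'
    (T : ℝ) (hT : 0 < T)
    (u : EuclideanSpace ℝ (Fin n) → ℝ → ℝ)
    (G : EuclideanSpace ℝ (Fin n) → ℝ → EuclideanSpace ℝ (Fin n))
    (H : EuclideanSpace ℝ (Fin n) → ℝ → (EuclideanSpace ℝ (Fin n) →L[ℝ] EuclideanSpace ℝ (Fin n)))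
    (u' : EuclideanSpace ℝ (Fin n) → ℝ → ℝ)
    -- u is continuous on Ω̄ × [0,T] and vanishes on ∂Ω × [0,T]
    (hu_cont : ContinuousOn (fun q : EuclideanSpace ℝ (Fin n) × ℝ => u q.1 q.2) (closure Ω ×ˢ Icc 0 T))
    (hu_bd : ∀ b ∈ frontier Ω, ∀ t ∈ Icc (0 : ℝ) T, u b t = 0)
    -- u is continuously differentiable in x on Ω̄ × [0,T), with spatial gradient G
    (hG : ∀ t ∈ Ico (0 : ℝ) T, ∀ x ∈ closure Ω,
      HasGradientWithinAt (fun y => u y t) (G x t) (closure Ω) x)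
    (hG_cont : ContinuousOn (fun q : EuclideanSpace ℝ (Fin n) × ℝ => G q.1 q.2) (closure Ω ×ˢ Ico 0 T))
    -- on Ω × (0,T], u has spatial gradient G, spatial Hessian H and time derivative u',
    -- all continuous there
    (hG2 : ∀ t ∈ Ioc (0 : ℝ) T, ∀ x ∈ Ω, HasGradientAt (fun y => u y t) (G x t) x)
    (hH : ∀ t ∈ Ioc (0 : ℝ) T, ∀ x ∈ Ω, HasFDerivAt (fun y => G y t) (H x t) x)
    (hu' : ∀ t ∈ Ioc (0 : ℝ) T, ∀ x ∈ Ω, HasDerivAt (fun s => u x s) (u' x t) t)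
    (hreg : ContinuousOn (fun q : EuclideanSpace ℝ (Fin n) × ℝ =>
      (u q.1 q.2, G q.1 q.2, H q.1 q.2, u' q.1 q.2)) (Ω ×ˢ Ioc 0 T))
    -- the PDE uₜ - Δu = |∇u|^p on Ω × (0,T]
    (hPDE : ∀ t ∈ Ioc (0 : ℝ) T, ∀ x ∈ Ω,
      u' x t - ∑ i : Fin n, ⟪H x t (EuclideanSpace.single i (1 : ℝ)),
        EuclideanSpace.single i (1 : ℝ)⟫ = ‖G x t‖ ^ p)
    -- a priori bounds: |uₜ| ≤ M on Ω × [T/2,T] and the Bernstein estimate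
    (M : ℝ) (hM : ∀ x ∈ Ω, ∀ t ∈ Icc (T / 2) T, |u' x t| ≤ M)
    (C₀ : ℝ) (hC₀ : ∀ x ∈ Ω, ∀ t ∈ Ico (0 : ℝ) T, ‖G x t‖ ≤ C₀ * ((δ x) ^ (-β) + 1))
    -- a ∈ ∂Ω is a gradient blow-up point:
    -- limsup of |∇u(x,t)| as t → T⁻, x → a equals ∞
    (a : EuclideanSpace ℝ (Fin n)) (ha : a ∈ frontier Ω)
    (hGBU : ∀ K : ℝ, ∀ η > 0, ∃ x ∈ Ω, ∃ t ∈ Ioo (T - η) T,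
      0 < t ∧ dist x a < η ∧ K ≤ ‖G x t‖)
    :
    ∀ K > 0, ∃ η > 0, ∀ x ∈ frontier Ω, x ≠ a → dist x a < η →
      ((K * (dist x a) ^ (-β) : ℝ) : EReal) ≤
        Filter.liminf (fun t => ((⟪G x t, ν x⟫ : ℝ) : EReal)) (nhdsWithin T (Iio T)) := by
  obtain rfl : δ = fun x => infDist x (frontier Ω) := funext hδ
  have hpos {t : ℝ} (ht : t ∈ Ioo (T / 2) T) : 0 < t := (half_pos hT).trans ht.1
  exact stmt8_general hp hβ hΩo ha (hΩc2 a ha) hδ₀ hν1 (half_lt_self hT)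
    (fun b hb t ht => hu_bd b hb t ⟨(hpos ht).le, ht.2.le⟩)
    (fun t ht => hG t ⟨(hpos ht).le, ht.2⟩) (fun t ht => hH t ⟨hpos ht, ht.2.le⟩)
    (fun t ht => hu' t ⟨hpos ht, ht.2.le⟩)
    (fun t ht => by simpa only [trace_eq_sum_inner_single] using hPDE t ⟨hpos ht, ht.2.le⟩)
    (fun x hx t ht => hM x hx t (Ioo_subset_Icc_self ht))
    (fun x hx t ht => hC₀ x hx t ⟨(hpos ht).le, ht.2⟩)
    fun K η hη => (hGBU K η hη).imp fun _ => And.imp_right <| .imp fun _ => And.imp_right And.right
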